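/- arXiv:1410.6800 — 4 statements merged into one kernel-verified Lean document; each statement's English description precedes it below -/
import Mathlib

section
/- Let I ⊆ ℝ be an interval, let f : I → ℝ be a strictly convex continuous function, let 𝓗 be a complex Hilbert space, and let (Hᵢ)_{i∈ι} be a net of self-adjoint bounded operators on 𝓗 with σ(Hᵢ) ⊆ I for all i. Suppose (Hᵢ) converges in the weak operator topology to a self-adjoint bounded operator H with σ(H) ⊆ I, and that (f(Hᵢ)) converges in the weak operator topology to f(H). Then for every bounded continuous function φ : I → ℝ, the net (φ(Hᵢ)) converges in the strong operator topology to φ(H). -/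
set_option synthInstance.maxHeartbeats 400000
set_option maxHeartbeats 800000

open scoped InnerProductSpace
open Filter Topology

lemma aux_conv3 {I : Set ℝ} {f : ℝ → ℝ} (hf : ConvexOn ℝ I f) {a t c : ℝ}
    (ha : a ∈ I) (hc : c ∈ I) (hac : a < c) (hat : a ≤ t) (htc : t ≤ c) :
    f t * (c - a) ≤ (c - t) * f a + (t - a) * f c := by
  have hqx : 0 < c - a := by linarith
  have key := hf.2 ha hc (div_nonneg (sub_nonneg.2 htc) hqx.le)
    (div_nonneg (sub_nonneg.2 hat) hqx.le) (by field_simp; ring)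
  have e : ((c - t) / (c - a)) • a + ((t - a) / (c - a)) • c = t := by
    simp only [smul_eq_mul]; field_simp; ring
  rw [e] at key
  simp only [smul_eq_mul] at key
  have := mul_le_mul_of_nonneg_right key hqx.le
  calc _ ≤ _ := this
    _ = _ := by field_simp

lemma aux_right {I : Set ℝ} {f : ℝ → ℝ} (hf : ConvexOn ℝ I f) {m b p q x : ℝ}
    (hp : p ∈ I) (hx : x ∈ I) (hpq : p < q) (hqx : q ≤ x)
    (h0 : f p = m * p + b) (h1 : f q = m * q + b) : m * x + b ≤ f x := by
  have := aux_conv3 hf hp hx (by linarith) hpq.le hqx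
  rw [h0, h1] at this
  have h : 0 ≤ (q - p) * (f x - (m * x + b)) := by linarith
  have := nonneg_of_mul_nonneg_right h (by linarith)
  linarith

lemma aux_left {I : Set ℝ} {f : ℝ → ℝ} (hf : ConvexOn ℝ I f) {m b p q x : ℝ}
    (hq : q ∈ I) (hx : x ∈ I) (hpq : p < q) (hqx : x ≤ p)
    (h0 : f p = m * p + b) (h1 : f q = m * q + b) : m * x + b ≤ f x := by
  have := aux_conv3 hf hx hq (by linarith) hqx hpq.le
  rw [h0, h1] at this
  have h : 0 ≤ (q - p) * (f x - (m * x + b)) := by linarith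
  have := nonneg_of_mul_nonneg_right h (by linarith)
  linarith

/-- lower bound for `f` minus its chord -/
lemma aux_lower {I : Set ℝ} {f : ℝ → ℝ} (hf : ConvexOn ℝ I f) {m b p q x : ℝ}
    (hp : p ∈ I) (hq : q ∈ I) (hx : x ∈ I) (hpq : p < q)
    (h0 : f p = m * p + b) (h1 : f q = m * q + b) :
    0 ≤ f x - (m * x + b) + (f p + f q - 2 * f ((p + q) / 2)) := by
  have hη : 0 ≤ f p + f q - 2 * f ((p + q) / 2) := by
    have := aux_conv3 hf hp hq hpq (t := (p + q) / 2) (by linarith) (by linarith)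
    have h : 0 ≤ (q - p) * (f p + f q - 2 * f ((p + q) / 2)) := by linarith
    exact nonneg_of_mul_nonneg_right h (by linarith)
  rcases le_total x p with hxp | hxp
  · have := aux_left hf hq hx hpq hxp h0 h1
    linarith
  rcases le_total q x with hxq | hxq
  · have := aux_right hf hp hx hpq hxq h0 h1
    linarith
  have hx' : p + q - x ∈ I := hf.1.ordConnected.out hp hq ⟨by linarith, by linarith⟩
  have e1 := aux_conv3 hf hp hq hpq (t := p + q - x) (by linarith) (by linarith)
  have e1' : f (p + q - x) ≤ m * (p + q - x) + b := by
    rw [h0, h1] at e1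
    have h : 0 ≤ (q - p) * (m * (p + q - x) + b - f (p + q - x)) := by linarith
    have := nonneg_of_mul_nonneg_right h (by linarith)
    linarith
  have e2 := hf.2 hx hx' (show (0 : ℝ) ≤ 1 / 2 by norm_num) (show (0 : ℝ) ≤ 1 / 2 by norm_num) (by norm_num)
  have e3 : (1 / 2 : ℝ) • x + (1 / 2 : ℝ) • (p + q - x) = (p + q) / 2 := by
    simp only [smul_eq_mul]; ring
  rw [e3] at e2
  simp only [smul_eq_mul] at e2
  linarith

lemma aux_mono {I : Set ℝ} {f : ℝ → ℝ} (hf : ConvexOn ℝ I f) {m b p q t x : ℝ}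
    (hp : p ∈ I) (hq : q ∈ I) (hx : x ∈ I) (hpq : p < q)
    (h0 : f p = m * p + b) (h1 : f q = m * q + b) (hqt : q ≤ t) (htx : t ≤ x) :
    f t - (m * t + b) ≤ f x - (m * x + b) := by
  rcases eq_or_lt_of_le htx with rfl | htx
  · exact le_rfl
  have hh := aux_right hf hp hx hpq (by linarith) h0 h1
  have := aux_conv3 hf hq hx (by linarith) hqt htx.le
  rw [h1] at this
  have h : 0 ≤ (x - q) * ((f x - (m * x + b)) - (f t - (m * t + b))) := by
    nlinarith [mul_nonneg (sub_nonneg.2 htx.le) (sub_nonneg.2 hh)]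
  have := nonneg_of_mul_nonneg_right h (by linarith)
  linarith

lemma aux_gap_right {I : Set ℝ} {f : ℝ → ℝ} (hf : ConvexOn ℝ I f) {m b p q s t x : ℝ}
    (hp : p ∈ I) (hq : q ∈ I) (hx : x ∈ I) (hpq : p < q)
    (h0 : f p = m * p + b) (h1 : f q = m * q + b) (hqs : q ≤ s) (hst : s < t) (htx : t ≤ x) :
    f s + f t - 2 * f ((s + t) / 2) ≤ f x - (m * x + b) := by
  have ht : t ∈ I := hf.1.ordConnected.out hq hx ⟨by linarith, by linarith⟩
  have hm : (s + t) / 2 ∈ I := hf.1.ordConnected.out hq hx ⟨by linarith, by linarith⟩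
  have a1 := aux_mono hf hp hq hx hpq h0 h1 (t := t) (by linarith) htx
  have a2 := aux_mono hf hp hq hm hpq h0 h1 (t := s) hqs (by linarith)
  have a3 := aux_right hf hp hm hpq (by linarith) h0 h1
  linarith

/-- uniform gap -/
lemma aux_gap {I : Set ℝ} {f : ℝ → ℝ} (hf : StrictConvexOn ℝ I f) {a b r : ℝ} (hr : 0 < r) :
    ∃ c > 0, ∀ p ∈ I, ∀ q ∈ I, ∀ m d : ℝ, p < q → a - r ≤ p → q ≤ b + r →
      f p = m * p + d → f q = m * q + d →
      ∀ x ∈ I, (x ≤ a - 2 * r ∨ b + 2 * r ≤ x) → c ≤ f x - (m * x + d) := by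
  have hc := hf.convexOn
  have pos : ∀ s ∈ I, ∀ t ∈ I, s < t → 0 < f s + f t - 2 * f ((s + t) / 2) := by
    intro s hs t ht hst
    have := hf.2 hs ht hst.ne (show (0 : ℝ) < 1 / 2 by norm_num) (show (0 : ℝ) < 1 / 2 by norm_num)
      (by norm_num)
    have e3 : (1 / 2 : ℝ) • s + (1 / 2 : ℝ) • t = (s + t) / 2 := by
      simp only [smul_eq_mul]; ring
    rw [e3] at this
    simp only [smul_eq_mul] at this
    linarith
  have hR : ∃ c > 0, ∀ p ∈ I, ∀ q ∈ I, ∀ m d : ℝ, p < q → q ≤ b + r →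
      f p = m * p + d → f q = m * q + d →
      ∀ x ∈ I, b + 2 * r ≤ x → c ≤ f x - (m * x + d) := by
    by_cases h : b + r ∈ I ∧ b + 2 * r ∈ I
    · refine ⟨_, pos _ h.1 _ h.2 (by linarith), ?_⟩
      intro p hp q hq m d hpq hqb h0 h1 x hx hbx
      exact aux_gap_right hc hp hq hx hpq h0 h1 hqb (by linarith) hbx
    · refine ⟨1, one_pos, ?_⟩
      intro p hp q hq m d hpq hqb h0 h1 x hx hbx
      exact absurd ⟨hc.1.ordConnected.out hq hx ⟨by linarith, by linarith⟩,
        hc.1.ordConnected.out hq hx ⟨by linarith, by linarith⟩⟩ h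
  have hL : ∃ c > 0, ∀ p ∈ I, ∀ q ∈ I, ∀ m d : ℝ, p < q → a - r ≤ p →
      f p = m * p + d → f q = m * q + d →
      ∀ x ∈ I, x ≤ a - 2 * r → c ≤ f x - (m * x + d) := by
    have hneg : ConvexOn ℝ (Neg.neg ⁻¹' I) (fun x => f (-x)) := by
      have := hc.comp_linearMap (-LinearMap.id : ℝ →ₗ[ℝ] ℝ)
      exact this
    by_cases h : a - r ∈ I ∧ a - 2 * r ∈ I
    · refine ⟨_, pos _ h.2 _ h.1 (by linarith), ?_⟩
      intro p hp q hq m d hpq hqb h0 h1 x hx hbx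
      have := aux_gap_right hneg (m := -m) (b := d) (p := -q) (q := -p) (s := -(a - r))
        (t := -(a - 2 * r)) (x := -x) (by simpa using hq) (by simpa using hp) (by simpa using hx)
        (by linarith) (by simp [h1]) (by simp [h0]) (by linarith) (by linarith) (by linarith)
      simp only [neg_neg] at this
      have e : -((-(a - r) + -(a - 2 * r)) / 2) = (a - 2 * r + (a - r)) / 2 := by ring
      rw [e] at this
      linarith
    · refine ⟨1, one_pos, ?_⟩
      intro p hp q hq m d hpq hqb h0 h1 x hx hbx
      exact absurd ⟨hc.1.ordConnected.out hx hp ⟨by linarith, by linarith⟩,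
        hc.1.ordConnected.out hx hp ⟨by linarith, by linarith⟩⟩ h
  obtain ⟨c1, hc1, H1⟩ := hR
  obtain ⟨c2, hc2, H2⟩ := hL
  refine ⟨min c1 c2, lt_min hc1 hc2, ?_⟩
  intro p hp q hq m d hpq hap hqb h0 h1 x hx hx'
  rcases hx' with hx' | hx'
  · exact (min_le_right _ _).trans (H2 p hp q hq m d hpq hap h0 h1 x hx hx')
  · exact (min_le_left _ _).trans (H1 p hp q hq m d hpq hqb h0 h1 x hx hx')

/-- continuous partition of unity on `[A,B]` subordinate to overlapping windows -/
lemma aux_partition (A δ : ℝ) (hδ : 0 < δ) (n : ℕ) (hn : 1 ≤ n) :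
    ∃ P : ℕ → ℝ → ℝ, (∀ k, Continuous (P k)) ∧ (∀ k x, 0 ≤ P k x) ∧
      (∀ x, ∑ k ∈ Finset.range n, P k x = 1) ∧
      ∀ k < n, ∀ x, A ≤ x → x ≤ A + (n + 1) * δ → P k x ≠ 0 →
        A + k * δ ≤ x ∧ x ≤ A + (k + 2) * δ := by
  let θ : ℕ → ℝ → ℝ := fun k x =>
    if k = 0 then 1 else if n ≤ k then 0 else max 0 (min 1 ((x - (A + k * δ)) / δ))
  have θc : ∀ k, Continuous (θ k) := by
    intro k
    simp only [θ]
    split_ifs <;> fun_prop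
  have θ0 : ∀ k x, 0 ≤ θ k x := by
    intro k x
    simp only [θ]
    split_ifs <;> first | exact le_max_left _ _ | norm_num
  have θ1 : ∀ k x, θ k x ≤ 1 := by
    intro k x
    simp only [θ]
    split_ifs <;> first | exact max_le (by norm_num) (min_le_left _ _) | norm_num
  have anti : ∀ k x, θ (k + 1) x ≤ θ k x := by
    intro k x
    by_cases h0 : k = 0
    · have : θ k x = 1 := by simp [θ, h0]
      rw [this]
      exact θ1 _ _
    · dsimp only [θ]
      rw [if_neg (by omega), if_neg h0]
      by_cases h1 : n ≤ k
      · rw [if_pos h1, if_pos (by omega)]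
      · rw [if_neg h1]
        split_ifs
        · exact le_max_left _ _
        · refine max_le_max le_rfl (min_le_min le_rfl ?_)
          gcongr
          simp
  refine ⟨fun k x => θ k x - θ (k + 1) x, fun k => (θc k).sub (θc _),
    fun k x => sub_nonneg.2 (anti k x), ?_, ?_⟩
  · intro x
    rw [Finset.sum_range_sub']
    have e0 : θ 0 x = 1 := by simp [θ]
    have en : θ n x = 0 := by
      simp only [θ]
      rw [if_neg (by omega), if_pos le_rfl]
    rw [e0, en, sub_zero]
  · intro k hk x hA hB hne
    constructor
    · by_contra hlt
      push Not at hlt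
      apply hne
      have h0 : k ≠ 0 := by
        rintro rfl
        simp at hlt
        linarith
      have z : θ k x = 0 := by
        dsimp only [θ]
        rw [if_neg h0, if_neg (by omega)]
        apply max_eq_left
        exact (min_le_right _ _).trans (div_nonpos_of_nonpos_of_nonneg (by linarith) hδ.le)
      have z1 := anti k x
      have z2 := θ0 (k + 1) x
      linarith
    · by_contra hlt
      push Not at hlt
      apply hne
      have h0 : k + 1 < n := by
        by_contra h
        have : k + 1 = n := by omega
        have : (n : ℝ) = k + 1 := by exact_mod_cast this.symm
        rw [this] at hB
        linarith
      have z : θ (k + 1) x = 1 := by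
        dsimp only [θ]
        rw [if_neg (by omega), if_neg (by omega)]
        have : 1 ≤ (x - (A + ((k + 1 : ℕ) : ℝ) * δ)) / δ := by
          rw [le_div_iff₀ hδ]
          push_cast
          linarith
        rw [min_eq_left this]
        norm_num
      have z1 := anti k x
      have z2 := θ1 k x
      linarith

lemma aux_sum {𝓗 : Type*} [NormedAddCommGroup 𝓗] {ι : Type*} {l : Filter ι} (n : ℕ)
    (w : ℕ → ι → 𝓗) (b : ℕ → ι → ℝ) (L c d : ℕ → ℝ)
    (hb : ∀ k < n, Tendsto (b k) l (𝓝 (L k))) (hw : ∀ k < n, ∀ i, ‖w k i‖ ^ 2 ≤ b k i)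
    (hL : ∀ k < n, L k ≤ c k * d k ^ 2) (hc : ∀ k < n, 0 ≤ c k) (hd : ∀ k < n, 0 ≤ d k)
    (C D e : ℝ) (hC : ∑ k ∈ Finset.range n, c k ≤ C) (hD : ∑ k ∈ Finset.range n, d k ^ 2 ≤ D ^ 2)
    (hD0 : 0 ≤ D) (he : √C * D < e) :
    ∀ᶠ i in l, ‖∑ k ∈ Finset.range n, w k i‖ < e := by
  have ht : Tendsto (fun i => ∑ k ∈ Finset.range n, √(b k i)) l
      (𝓝 (∑ k ∈ Finset.range n, √(L k))) :=
    tendsto_finsetSum _ fun k hk => (hb k (Finset.mem_range.1 hk)).sqrt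
  have hle : ∑ k ∈ Finset.range n, √(L k) < e := by
    refine lt_of_le_of_lt ?_ he
    calc ∑ k ∈ Finset.range n, √(L k) ≤ ∑ k ∈ Finset.range n, √(c k) * d k := by
          refine Finset.sum_le_sum fun k hk => ?_
          have hk := Finset.mem_range.1 hk
          calc √(L k) ≤ √(c k * d k ^ 2) := Real.sqrt_le_sqrt (hL k hk)
            _ = √(c k) * d k := by rw [Real.sqrt_mul (hc k hk), Real.sqrt_sq (hd k hk)]
      _ ≤ √(∑ k ∈ Finset.range n, √(c k) ^ 2) * √(∑ k ∈ Finset.range n, d k ^ 2) :=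
          Real.sum_mul_le_sqrt_mul_sqrt _ _ _
      _ = √(∑ k ∈ Finset.range n, c k) * √(∑ k ∈ Finset.range n, d k ^ 2) := by
          congr 2
          exact Finset.sum_congr rfl fun k hk => Real.sq_sqrt (hc k (Finset.mem_range.1 hk))
      _ ≤ √C * D := by
          gcongr
          exact Real.sqrt_le_iff.2 ⟨hD0, hD⟩
  filter_upwards [ht.eventually (gt_mem_nhds hle)] with i hi
  refine lt_of_le_of_lt ((norm_sum_le _ _).trans (Finset.sum_le_sum fun k hk => ?_)) hi
  exact Real.le_sqrt_of_sq_le (hw k (Finset.mem_range.1 hk) i)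

section ops
variable {𝓗 : Type*} [NormedAddCommGroup 𝓗] [InnerProductSpace ℂ 𝓗] [CompleteSpace 𝓗]

lemma op_mono (S : 𝓗 →L[ℂ] 𝓗) {g h : ℝ → ℝ}
    (hg : ContinuousOn g (spectrum ℝ S)) (hh : ContinuousOn h (spectrum ℝ S))
    (hgh : ∀ x ∈ spectrum ℝ S, g x ≤ h x) (v : 𝓗) :
    (⟪cfc g S v, v⟫_ℂ).re ≤ (⟪cfc h S v, v⟫_ℂ).re := by
  have h1 := cfc_mono hgh hg hh
  rw [ContinuousLinearMap.le_def] at h1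
  have := h1.re_inner_nonneg_left v
  simp only [sub_apply, inner_sub_left] at this
  simpa using this

lemma op_normsq (S : 𝓗 →L[ℂ] 𝓗) {g : ℝ → ℝ}
    (hg : ContinuousOn g (spectrum ℝ S)) (v : 𝓗) :
    ‖cfc g S v‖ ^ 2 = (⟪cfc (fun x => g x ^ 2) S v, v⟫_ℂ).re := by
  have hsa : IsSelfAdjoint (cfc g S) := cfc_predicate g S
  have e : cfc (fun x => g x ^ 2) S = cfc g S * cfc g S := by
    rw [← cfc_mul g g S hg hg]
    simp only [pow_two]
  rw [e, mul_apply_eq_comp]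
  have := hsa.isSymmetric (cfc g S v) v
  simp only [ContinuousLinearMap.coe_coe] at this
  rw [this, inner_self_eq_norm_sq_to_K]
  norm_cast

lemma op_affine (S : 𝓗 →L[ℂ] 𝓗) (hS : IsSelfAdjoint S) {g : ℝ → ℝ}
    (hg : ContinuousOn g (spectrum ℝ S)) (K m d : ℝ) (v : 𝓗) :
    (⟪cfc (fun x => K * (g x - (m * x + d))) S v, v⟫_ℂ).re =
      K * ((⟪cfc g S v, v⟫_ℂ).re - (m * (⟪S v, v⟫_ℂ).re + d * ‖v‖ ^ 2)) := by
  have h1 : cfc (fun x : ℝ => m * x + d) S = m • S + algebraMap ℝ _ d := by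
    rw [cfc_add_const d (fun x => m * x) S, cfc_const_mul m (fun x => x) S, cfc_id' ℝ S]
  rw [cfc_const_mul K (fun x => g x - (m * x + d)) S,
    cfc_sub g (fun x => m * x + d) S, h1]
  have h2 : (⟪v, v⟫_ℂ).re = ‖v‖ ^ 2 := by
    rw [inner_self_eq_norm_sq_to_K]; norm_cast
  have h3 : ∀ (c : ℝ) (x y : 𝓗), (⟪c • x, y⟫_ℂ).re = c * (⟪x, y⟫_ℂ).re := by
    intro c x y
    rw [← Complex.coe_smul, inner_smul_left]
    simp
  simp only [smul_apply, sub_apply,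
    add_apply, Algebra.algebraMap_eq_smul_one,
    one_apply_eq_self, h3, inner_sub_left, inner_add_left, Complex.sub_re,
    Complex.add_re, h2]

lemma op_sum (S : 𝓗 →L[ℂ] 𝓗) (hS : IsSelfAdjoint S) (n : ℕ) (P : ℕ → ℝ → ℝ)
    (hP : ∀ k, Continuous (P k)) (h1 : ∀ x, ∑ k ∈ Finset.range n, P k x = 1) (u : 𝓗) :
    ∑ k ∈ Finset.range n, cfc (P k) S u = u := by
  have := cfc_sum P S (Finset.range n) (fun k _ => (hP k).continuousOn)
  have e : (∑ k ∈ Finset.range n, P k) = fun _ => (1 : ℝ) := by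
    ext x
    simp [h1]
  rw [e, cfc_const_one ℝ S] at this
  rw [← sum_apply, ← this]
  rfl

lemma op_sumsq (S : 𝓗 →L[ℂ] 𝓗) (hS : IsSelfAdjoint S) (n : ℕ) (P : ℕ → ℝ → ℝ)
    (hP : ∀ k, Continuous (P k)) (h0 : ∀ k x, 0 ≤ P k x)
    (h1 : ∀ x, ∑ k ∈ Finset.range n, P k x = 1) (u : 𝓗) :
    ∑ k ∈ Finset.range n, ‖cfc (P k) S u‖ ^ 2 ≤ ‖u‖ ^ 2 := by
  have hu : ‖u‖ ^ 2 = ∑ k ∈ Finset.range n, (⟪cfc (P k) S u, u⟫_ℂ).re := by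
    rw [← Complex.re_sum, ← sum_inner, op_sum S hS n P hP h1 u, inner_self_eq_norm_sq_to_K]
    norm_cast
  rw [hu]
  refine Finset.sum_le_sum fun k hk => ?_
  rw [op_normsq S (hP k).continuousOn]
  refine op_mono S (g := fun x => P k x ^ 2) ((hP k).pow 2).continuousOn (hP k).continuousOn (fun x _ => ?_) u
  have : P k x ≤ 1 := by
    rw [← h1 x]
    exact Finset.single_le_sum (f := fun k => P k x) (fun j _ => h0 j x) hk
  nlinarith [h0 k x]

lemma aux_small {I : Set ℝ} {f : ℝ → ℝ} (hfc : ContinuousOn f I) {A B : ℝ} (hAB : A < B)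
    (hI : Set.Icc A B ⊆ I) :
    Tendsto (fun n : ℕ => f B - f (B - (B - A) / (n + 1)) - (f (A + (B - A) / (n + 1)) - f A))
      atTop (𝓝 0) := by
  have hδ : Tendsto (fun n : ℕ => (B - A) / ((n : ℝ) + 1)) atTop (𝓝 0) := by
    have := (tendsto_one_div_add_atTop_nhds_zero_nat (𝕜 := ℝ)).const_mul (B - A)
    simpa [div_eq_mul_inv] using this
  have hp : ∀ n : ℕ, 0 ≤ (B - A) / ((n : ℝ) + 1) ∧ (B - A) / ((n : ℝ) + 1) ≤ B - A := by
    intro n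
    have : (0 : ℝ) ≤ n := n.cast_nonneg
    exact ⟨div_nonneg (by linarith) (by linarith), div_le_self (by linarith) (by linarith)⟩
  have t1 : Tendsto (fun n : ℕ => f (B - (B - A) / (n + 1))) atTop (𝓝 (f B)) := by
    refine (hfc B (hI ⟨hAB.le, le_rfl⟩)).tendsto.comp (tendsto_nhdsWithin_iff.2 ⟨?_, ?_⟩)
    · simpa using tendsto_const_nhds.sub hδ
    · exact Eventually.of_forall fun n => hI ⟨by linarith [(hp n).2], by linarith [(hp n).1]⟩
  have t2 : Tendsto (fun n : ℕ => f (A + (B - A) / (n + 1))) atTop (𝓝 (f A)) := by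
    refine (hfc A (hI ⟨le_rfl, hAB.le⟩)).tendsto.comp (tendsto_nhdsWithin_iff.2 ⟨?_, ?_⟩)
    · simpa using tendsto_const_nhds.add hδ
    · exact Eventually.of_forall fun n => hI ⟨by linarith [(hp n).1], by linarith [(hp n).2]⟩
  simpa using ((tendsto_const_nhds (x := f B)).sub t1).sub (t2.sub (tendsto_const_nhds (x := f A)))

lemma stage1 {ι : Type*} (l : Filter ι)
    (I : Set ℝ) (f : ℝ → ℝ) (hf : StrictConvexOn ℝ I f) (hfc : ContinuousOn f I)
    (H : ι → 𝓗 →L[ℂ] 𝓗) (hsa : ∀ i, IsSelfAdjoint (H i))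
    (hspec : ∀ i, spectrum ℝ (H i) ⊆ I)
    (T : 𝓗 →L[ℂ] 𝓗) (hTsa : IsSelfAdjoint T)
    (hWOT : ∀ v w : 𝓗, Tendsto (fun i => ⟪(H i) v, w⟫_ℂ) l (𝓝 ⟪T v, w⟫_ℂ))
    (hfWOT : ∀ v w : 𝓗,
      Tendsto (fun i => ⟪(cfc f (H i)) v, w⟫_ℂ) l (𝓝 ⟪(cfc f T) v, w⟫_ℂ))
    (A B : ℝ) (hAB : A < B) (hA : A ∈ I) (hB : B ∈ I) (hT : spectrum ℝ T ⊆ Set.Icc A B)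
    (χ : ℝ → ℝ) (hχ : Continuous χ) (a b r : ℝ) (hr : 0 < r)
    (hχ0 : ∀ x ∈ spectrum ℝ T, χ x ≠ 0 → a ≤ x ∧ x ≤ b)
    (g : ℝ → ℝ) (hg : ContinuousOn g I) (M : ℝ) (hM0 : 0 ≤ M) (hM : ∀ x ∈ I, g x ^ 2 ≤ M)
    (hg0 : ∀ x ∈ I, a - 2 * r < x → x < b + 2 * r → g x = 0) (v : 𝓗) :
    Tendsto (fun i => cfc g (H i) (cfc χ T v)) l (𝓝 0) := by
  have hcv := hf.convexOn
  have hII : Set.Icc A B ⊆ I := hcv.1.ordConnected.out hA hB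
  have hfT : ContinuousOn f (spectrum ℝ T) := hfc.mono (hT.trans hII)
  have hfH : ∀ i, ContinuousOn f (spectrum ℝ (H i)) := fun i => hfc.mono (hspec i)
  have hgH : ∀ i, ContinuousOn g (spectrum ℝ (H i)) := fun i => hg.mono (hspec i)
  obtain ⟨c, hc, hgap⟩ := aux_gap hf (a := a) (b := b) hr
  set u := cfc χ T v with hu
  set K := M / c with hK
  have hK0 : 0 ≤ K := by positivity
  rw [tendsto_zero_iff_norm_tendsto_zero]
  rw [tendsto_order]
  refine ⟨fun e he => Eventually.of_forall fun i => he.trans_le (norm_nonneg _), fun e he => ?_⟩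
  have hδt : Tendsto (fun n : ℕ => (B - A) / ((n : ℝ) + 1)) atTop (𝓝 0) := by
    have := (tendsto_one_div_add_atTop_nhds_zero_nat (𝕜 := ℝ)).const_mul (B - A)
    simpa [div_eq_mul_inv] using this
  have hsm : Tendsto (fun n : ℕ => √(K * (f B - f (B - (B - A) / (n + 1)) -
      (f (A + (B - A) / (n + 1)) - f A))) * ‖u‖) atTop (𝓝 0) := by
    simpa using ((aux_small hfc hAB hII).const_mul K).sqrt.mul_const ‖u‖
  obtain ⟨n, hn1, hn2, hn3⟩ := ((eventually_ge_atTop 1).and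
    ((hδt.eventually (gt_mem_nhds (show (0 : ℝ) < r / 2 by positivity))).and
    (hsm.eventually (gt_mem_nhds he)))).exists
  set δ := (B - A) / ((n : ℝ) + 1) with hδdef
  have hn0 : (0 : ℝ) < (n : ℝ) + 1 := by positivity
  have hδ : 0 < δ := div_pos (by linarith) hn0
  have hBe : A + (n + 1) * δ = B := by rw [hδdef]; field_simp; ring
  obtain ⟨P, hPc, hP0, hP1, hPs⟩ := aux_partition A δ hδ n hn1
  let y : ℕ → ℝ := fun k => A + k * δ
  have yle : ∀ k ≤ n + 1, y k ∈ I := by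
    intro k hk
    refine hII ⟨?_, ?_⟩
    · have : 0 ≤ (k : ℝ) * δ := by positivity
      simp only [y]; linarith
    · have : (k : ℝ) * δ ≤ (n + 1) * δ := by
        gcongr; exact_mod_cast hk
      simp only [y]; linarith
  have yss : ∀ k, y (k + 1) = y k + δ := by intro k; simp only [y]; push_cast; ring
  let η : ℕ → ℝ := fun k => f (y k) + f (y (k + 2)) - 2 * f (y (k + 1))
  have ymid : ∀ k, (y k + y (k + 2)) / 2 = y (k + 1) := by
    intro k; rw [yss (k + 1), yss k]; ring
  let m : ℕ → ℝ := fun k => (f (y (k + 2)) - f (y k)) / (2 * δ)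
  let d : ℕ → ℝ := fun k => f (y k) - m k * y k
  have ylt : ∀ k, y k < y (k + 2) := by intro k; rw [yss (k + 1), yss k]; linarith
  have ch0 : ∀ k, f (y k) = m k * y k + d k := by intro k; simp only [d]; ring
  have ch1 : ∀ k, f (y (k + 2)) = m k * y (k + 2) + d k := by
    intro k
    have : y (k + 2) = y k + 2 * δ := by rw [yss (k + 1), yss k]; ring
    have h2 : m k * (2 * δ) = f (y (k + 2)) - f (y k) := by
      simp only [m]; field_simp
    have h3 : m k * y (k + 2) = m k * y k + m k * (2 * δ) := by rw [this]; ring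
    rw [h3, h2]; simp only [d]; ring
  have low : ∀ k < n, ∀ x ∈ I, 0 ≤ f x - (m k * x + d k) + η k := by
    intro k hk x hx
    have := aux_lower hcv (yle k (by omega)) (yle (k + 2) (by omega)) hx (ylt k) (ch0 k) (ch1 k)
    rw [ymid] at this
    exact this
  have ηn : ∀ k < n, 0 ≤ η k := by
    intro k hk
    have := low k hk _ (yle k (by omega))
    rw [← ch0 k] at this
    linarith
  have up : ∀ k < n, ∀ x, y k ≤ x → x ≤ y (k + 2) → f x ≤ m k * x + d k := by
    intro k hk x h1 h2
    have := aux_conv3 hcv (yle k (by omega)) (yle (k + 2) (by omega)) (ylt k) h1 h2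
    rw [ch0 k, ch1 k] at this
    have h : 0 ≤ (y (k + 2) - y k) * (m k * x + d k - f x) := by linarith
    have := nonneg_of_mul_nonneg_right h (by linarith [ylt k])
    linarith
  have ηsum : ∑ k ∈ Finset.range n, η k = f B - f (B - δ) - (f (A + δ) - f A) := by
    have : ∀ k, η k = (fun j => f (y (j + 1)) - f (y j)) (k + 1)
        - (fun j => f (y (j + 1)) - f (y j)) k := by
      intro k; simp only [η]; ring_nf
    rw [Finset.sum_congr rfl (fun k _ => this k),
      Finset.sum_range_sub (fun j => f (y (j + 1)) - f (y j))]
    have e1 : y (n + 1) = B := by simp only [y]; push_cast; exact hBe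
    have e2 : y n = B - δ := by have := yss n; linarith
    have e3 : y (0 + 1) = A + δ := by simp [y]
    have e4 : y 0 = A := by simp [y]
    rw [e1, e2, e3, e4]
  let U : ℕ → 𝓗 := fun k => cfc (P k) T u
  have Usum : ∀ i, cfc g (H i) u = ∑ k ∈ Finset.range n, cfc g (H i) (U k) := by
    intro i
    rw [← map_sum, op_sum T hTsa n P hPc hP1 u]
  have Ueq : ∀ k, U k = cfc (fun x => P k x * χ x) T v := by
    intro k
    rw [cfc_mul (P k) χ T (hPc k).continuousOn hχ.continuousOn]
    rfl
  simp_rw [Usum]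
  -- scalar majorants
  let b' : ℕ → ι → ℝ := fun k i => K * ((⟪cfc f (H i) (U k), U k⟫_ℂ).re -
    (m k * (⟪H i (U k), U k⟫_ℂ).re + (d k - η k) * ‖U k‖ ^ 2))
  let L : ℕ → ℝ := fun k => K * ((⟪cfc f T (U k), U k⟫_ℂ).re -
    (m k * (⟪T (U k), U k⟫_ℂ).re + (d k - η k) * ‖U k‖ ^ 2))
  refine aux_sum n (fun k i => cfc g (H i) (U k)) b' L (fun k => K * η k) (fun k => ‖U k‖)
    ?_ ?_ ?_ (fun k hk => mul_nonneg hK0 (ηn k hk)) (fun k _ => norm_nonneg _)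
    (K * (f B - f (B - δ) - (f (A + δ) - f A))) ‖u‖ e ?_ ?_ (norm_nonneg _) hn3
  · intro k hk
    have q1 := (Complex.continuous_re.tendsto _).comp (hfWOT (U k) (U k))
    have q2 := (Complex.continuous_re.tendsto _).comp (hWOT (U k) (U k))
    exact (q1.sub ((q2.const_mul (m k)).add tendsto_const_nhds)).const_mul K
  · intro k hk i
    by_cases hz : ∃ x ∈ spectrum ℝ T, P k x * χ x ≠ 0
    · obtain ⟨x₀, hx₀, hne⟩ := hz
      have hab := hχ0 x₀ hx₀ (right_ne_zero_of_mul hne)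
      have hw := hPs k hk x₀ (hT hx₀).1 (by rw [hBe]; exact (hT hx₀).2) (left_ne_zero_of_mul hne)
      have hw1 : y k ≤ x₀ := hw.1
      have hw2 : x₀ ≤ y (k + 2) := by simp only [y]; push_cast; exact hw.2
      have hyy : y (k + 2) = y k + 2 * δ := by rw [yss (k + 1), yss k]; ring
      simp only [b']
      rw [op_normsq (H i) (hgH i), ← op_affine (H i) (hsa i) (hfH i)]
      refine op_mono (H i) (g := fun x => g x ^ 2) ((hgH i).pow 2) ?_ ?_ _
      · exact continuousOn_const.mul ((hfH i).sub (by fun_prop))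
      · intro x hx
        have hxI := hspec i hx
        have hl := low k hk x hxI
        by_cases hin : a - 2 * r < x ∧ x < b + 2 * r
        · rw [hg0 x hxI hin.1 hin.2]
          have : 0 ≤ K * (f x - (m k * x + d k) + η k) := mul_nonneg hK0 hl
          linarith
        · have hor : x ≤ a - 2 * r ∨ b + 2 * r ≤ x := by
            by_contra hcon
            push Not at hcon
            exact hin hcon
          have hgp := hgap _ (yle k (by omega)) _ (yle (k + 2) (by omega)) (m k) (d k) (ylt k)
            (by linarith) (by linarith) (ch0 k) (ch1 k) x hxI hor
          calc g x ^ 2 ≤ M := hM x hxI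
            _ = K * c := by rw [hK]; field_simp
            _ ≤ K * (f x - (m k * x + (d k - η k))) := by
              have := ηn k hk
              gcongr
              linarith
    · push Not at hz
      have : U k = 0 := by
        rw [Ueq, cfc_congr (g := fun _ => (0 : ℝ)) hz, cfc_const_zero]
        rfl
      simp [b', this]
  · intro k hk
    have hneg : (⟪cfc (fun x => K * (f x - (m k * x + d k))) T (U k), U k⟫_ℂ).re ≤ 0 := by
      have hcts : ContinuousOn (fun x => K * (f x - (m k * x + d k))) (spectrum ℝ T) :=
        continuousOn_const.mul (hfT.sub (by fun_prop))
      have hPT : ContinuousOn (P k) (spectrum ℝ T) := (hPc k).continuousOn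
      have hsP : IsSelfAdjoint (cfc (P k) T) := cfc_predicate _ T
      have e1 : (⟪cfc (fun x => K * (f x - (m k * x + d k))) T (U k), U k⟫_ℂ) =
          ⟪cfc (fun x => P k x * ((K * (f x - (m k * x + d k))) * P k x)) T u, u⟫_ℂ := by
        rw [cfc_mul (P k) (fun x => (K * (f x - (m k * x + d k))) * P k x) T hPT (hcts.mul hPT), cfc_mul _ (P k) T hcts hPT]
        exact (hsP.isSymmetric _ u).symm
      rw [e1]
      refine (op_mono T (g := fun x => P k x * ((K * (f x - (m k * x + d k))) * P k x))
        (h := fun _ => 0) (hPT.mul (hcts.mul hPT)) (by fun_prop) ?_ u).trans ?_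
      · intro x hx
        by_cases hz : P k x = 0
        · simp [hz]
        · have hw := hPs k hk x (hT hx).1 (by rw [hBe]; exact (hT hx).2) hz
          have := up k hk x hw.1 (by simp only [y]; push_cast; exact hw.2)
          have h1 : 0 ≤ K * (m k * x + d k - f x) := mul_nonneg hK0 (by linarith)
          have h2 : 0 ≤ (P k x) ^ 2 * (K * (m k * x + d k - f x)) := by positivity
          linarith
      · simp
    rw [op_affine T hTsa hfT] at hneg
    simp only [L]
    linarith
  · rw [← Finset.mul_sum, ηsum]
  · exact op_sumsq T hTsa n P hPc hP0 hP1 u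

lemma op_norm_mono (S : 𝓗 →L[ℂ] 𝓗) {g h : ℝ → ℝ}
    (hg : ContinuousOn g (spectrum ℝ S)) (hh : ContinuousOn h (spectrum ℝ S))
    (hgh : ∀ x ∈ spectrum ℝ S, g x ^ 2 ≤ h x ^ 2) (v : 𝓗) :
    ‖cfc g S v‖ ^ 2 ≤ ‖cfc h S v‖ ^ 2 := by
  rw [op_normsq S hg, op_normsq S hh]
  exact op_mono S (g := fun x => g x ^ 2) (h := fun x => h x ^ 2) (hg.pow 2) (hh.pow 2) hgh v

lemma op_sub_const (S : 𝓗 →L[ℂ] 𝓗) (hS : IsSelfAdjoint S) {g : ℝ → ℝ}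
    (hg : ContinuousOn g (spectrum ℝ S)) (c : ℝ) (v : 𝓗) :
    cfc (fun x => g x - c) S v = cfc g S v - c • v := by
  rw [cfc_sub g (fun _ => c) S, cfc_const c S]
  simp [Algebra.algebraMap_eq_smul_one]

lemma stage2 {ι : Type*} (l : Filter ι)
    (I : Set ℝ) (f : ℝ → ℝ) (hf : StrictConvexOn ℝ I f) (hfc : ContinuousOn f I)
    (H : ι → 𝓗 →L[ℂ] 𝓗) (hsa : ∀ i, IsSelfAdjoint (H i))
    (hspec : ∀ i, spectrum ℝ (H i) ⊆ I)
    (T : 𝓗 →L[ℂ] 𝓗) (hTsa : IsSelfAdjoint T)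
    (hWOT : ∀ v w : 𝓗, Tendsto (fun i => ⟪(H i) v, w⟫_ℂ) l (𝓝 ⟪T v, w⟫_ℂ))
    (hfWOT : ∀ v w : 𝓗,
      Tendsto (fun i => ⟪(cfc f (H i)) v, w⟫_ℂ) l (𝓝 ⟪(cfc f T) v, w⟫_ℂ))
    (A B : ℝ) (hAB : A < B) (hA : A ∈ I) (hB : B ∈ I) (hT : spectrum ℝ T ⊆ Set.Icc A B)
    (v : 𝓗) :
    Tendsto (fun i => cfc (fun x => max A (min B x)) (H i) v) l (𝓝 (T v)) := by
  set ψ : ℝ → ℝ := fun x => max A (min B x) with hψ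
  have ψc : Continuous ψ := by fun_prop
  have ψA : ∀ x, A ≤ ψ x := fun x => le_max_left _ _
  have ψB : ∀ x, ψ x ≤ B := fun x => max_le hAB.le (min_le_left _ _)
  rw [tendsto_iff_norm_sub_tendsto_zero, tendsto_order]
  refine ⟨fun e he => Eventually.of_forall fun i => he.trans_le (norm_nonneg _), fun e he => ?_⟩
  have hδt : Tendsto (fun n : ℕ => (B - A) / ((n : ℝ) + 1)) atTop (𝓝 0) := by
    have := (tendsto_one_div_add_atTop_nhds_zero_nat (𝕜 := ℝ)).const_mul (B - A)
    simpa [div_eq_mul_inv] using this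
  have hsm : Tendsto (fun n : ℕ => √(18 * (B - A) * ((B - A) / ((n : ℝ) + 1))) * ‖v‖)
      atTop (𝓝 0) := by
    simpa using (hδt.const_mul (18 * (B - A))).sqrt.mul_const ‖v‖
  obtain ⟨n, hn1, hn3⟩ := ((eventually_ge_atTop 1).and
    (hsm.eventually (gt_mem_nhds he))).exists
  set δ := (B - A) / ((n : ℝ) + 1) with hδdef
  have hn0 : (0 : ℝ) < (n : ℝ) + 1 := by positivity
  have hδ : 0 < δ := div_pos (by linarith) hn0
  have hBe : A + (n + 1) * δ = B := by rw [hδdef]; field_simp; ring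
  obtain ⟨P, hPc, hP0, hP1, hPs⟩ := aux_partition A δ hδ n hn1
  let U : ℕ → 𝓗 := fun k => cfc (P k) T v
  let lam : ℕ → ℝ := fun k => A + (k + 1) * δ
  let g : ℕ → ℝ → ℝ := fun k x => max 0 (|ψ x - lam k| - 2 * δ)
  have gc : ∀ k, Continuous (g k) := by intro k; fun_prop
  have lamA : ∀ k < n, A ≤ lam k ∧ lam k ≤ B := by
    intro k hk
    constructor
    · have : 0 ≤ ((k : ℝ) + 1) * δ := by positivity
      simp only [lam]; linarith
    · have : ((k : ℝ) + 1) * δ ≤ (n + 1) * δ := by gcongr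
      simp only [lam]; linarith
  have hwin : ∀ k < n, ∀ x ∈ spectrum ℝ T, P k x ≠ 0 → lam k - δ ≤ x ∧ x ≤ lam k + δ := by
    intro k hk x hx hne
    have := hPs k hk x (hT hx).1 (by rw [hBe]; exact (hT hx).2) hne
    simp only [lam]
    constructor <;> linarith [this.1, this.2]
  have hsum : ∀ i, cfc ψ (H i) v - T v =
      ∑ k ∈ Finset.range n, (cfc ψ (H i) (U k) - T (U k)) := by
    intro i
    rw [Finset.sum_sub_distrib, ← map_sum, ← map_sum, op_sum T hTsa n P hPc hP1 v]
  simp_rw [hsum]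
  have hg0 : ∀ k < n, Tendsto (fun i => cfc (g k) (H i) (U k)) l (𝓝 0) := by
    intro k hk
    refine stage1 l I f hf hfc H hsa hspec T hTsa hWOT hfWOT A B hAB hA hB hT (P k) (hPc k)
      (lam k - δ) (lam k + δ) (δ / 2) (by positivity) (hwin k hk) (g k) (gc k).continuousOn
      ((B - A) ^ 2) (by positivity) ?_ ?_ v
    · intro x _
      have h0 : 0 ≤ g k x := le_max_left _ _
      have h1 : g k x ≤ B - A := by
        refine max_le (by linarith) ?_
        have : |ψ x - lam k| ≤ B - A := by
          rw [abs_le]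
          constructor <;> linarith [ψA x, ψB x, (lamA k hk).1, (lamA k hk).2]
        linarith
      gcongr
    · intro x _ h1 h2
      refine max_eq_left ?_
      have hl := lamA k hk
      have : |ψ x - lam k| ≤ 2 * δ := by
        rw [abs_le]
        constructor
        · have : lam k - 2 * δ ≤ ψ x :=
            (le_min (by linarith) (by linarith)).trans (le_max_right A (min B x))
          linarith
        · have : ψ x ≤ lam k + 2 * δ :=
            max_le (by linarith) ((min_le_right _ _).trans (by linarith))
          linarith
      linarith
  refine aux_sum n (fun k i => cfc ψ (H i) (U k) - T (U k))
    (fun k i => 2 * (2 * (‖cfc (g k) (H i) (U k)‖ ^ 2 + 4 * δ ^ 2 * ‖U k‖ ^ 2))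
      + 2 * (δ ^ 2 * ‖U k‖ ^ 2))
    (fun k => 18 * δ ^ 2 * ‖U k‖ ^ 2) (fun k => 18 * δ ^ 2) (fun k => ‖U k‖)
    ?_ ?_ (fun k _ => le_rfl) (fun k _ => by positivity) (fun k _ => norm_nonneg _)
    (18 * (B - A) * δ) ‖v‖ e ?_ ?_ (norm_nonneg _) hn3
  · intro k hk
    have := ((((hg0 k hk).norm.pow 2).add_const (4 * δ ^ 2 * ‖U k‖ ^ 2)).const_mul 2
      |>.const_mul 2).add_const (2 * (δ ^ 2 * ‖U k‖ ^ 2))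
    convert this using 2
    simp only [norm_zero]
    ring
  · intro k hk i
    have e1 : ‖cfc ψ (H i) (U k) - lam k • U k‖ ^ 2 ≤
        2 * (‖cfc (g k) (H i) (U k)‖ ^ 2 + 4 * δ ^ 2 * ‖U k‖ ^ 2) := by
      rw [← op_sub_const (H i) (hsa i) ψc.continuousOn, op_normsq (H i) (by fun_prop),
        op_normsq (H i) (gc k).continuousOn]
      have h2 := op_affine (H i) (hsa i) (g := fun x => g k x ^ 2)
        ((gc k).pow 2).continuousOn 2 0 (-(4 * δ ^ 2)) (U k)
      have h3 : 2 * ((⟪cfc (fun x => g k x ^ 2) (H i) (U k), U k⟫_ℂ).re + 4 * δ ^ 2 * ‖U k‖ ^ 2) =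
          (⟪cfc (fun x => 2 * (g k x ^ 2 - (0 * x + -(4 * δ ^ 2)))) (H i) (U k), U k⟫_ℂ).re := by
        rw [h2]; ring
      rw [h3]
      refine op_mono (H i) (by fun_prop) (by fun_prop) (fun x _ => ?_) _
      have h4 : |ψ x - lam k| ≤ 2 * δ + g k x := by
        have : |ψ x - lam k| - 2 * δ ≤ g k x := le_max_right _ _
        linarith
      have h5 : 0 ≤ |ψ x - lam k| := abs_nonneg _
      have h6 : |ψ x - lam k| ^ 2 ≤ (2 * δ + g k x) ^ 2 := by gcongr
      rw [sq_abs] at h6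
      nlinarith [sq_nonneg (2 * δ - g k x)]
    have e2 : ‖T (U k) - lam k • U k‖ ^ 2 ≤ δ ^ 2 * ‖U k‖ ^ 2 := by
      have hPT : ContinuousOn (P k) (spectrum ℝ T) := (hPc k).continuousOn
      have h1 : T (U k) - lam k • U k = cfc (fun x => (x - lam k) * P k x) T v := by
        rw [cfc_mul (fun x => x - lam k) (P k) T (by fun_prop) hPT, mul_apply_eq_comp,
          op_sub_const T hTsa (g := fun x => x) (by fun_prop), cfc_id' ℝ T]
      have h2 : δ ^ 2 * ‖U k‖ ^ 2 = ‖cfc (fun x => δ * P k x) T v‖ ^ 2 := by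
        rw [cfc_const_mul δ (P k) T hPT, smul_apply, norm_smul, mul_pow]
        simp [U]
      rw [h1, h2]
      have hc1 : Continuous (fun x => (x - lam k) * P k x) := by
        have := hPc k
        fun_prop
      have hc2 : Continuous (fun x => δ * P k x) := by
        have := hPc k
        fun_prop
      refine op_norm_mono T hc1.continuousOn hc2.continuousOn (fun x hx => ?_) v
      by_cases hz : P k x = 0
      · simp [hz]
      · have := hwin k hk x hx hz
        rw [mul_pow, mul_pow]
        refine mul_le_mul_of_nonneg_right ?_ (sq_nonneg _)
        exact sq_le_sq' (by linarith) (by linarith)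
    have e3 : cfc ψ (H i) (U k) - T (U k) =
        (cfc ψ (H i) (U k) - lam k • U k) - (T (U k) - lam k • U k) := by abel
    have e4 := norm_sub_le (cfc ψ (H i) (U k) - lam k • U k) (T (U k) - lam k • U k)
    rw [← e3] at e4
    have e5 : ‖cfc ψ (H i) (U k) - T (U k)‖ ^ 2 ≤
        (‖cfc ψ (H i) (U k) - lam k • U k‖ + ‖T (U k) - lam k • U k‖) ^ 2 := by gcongr
    nlinarith [sq_nonneg (‖cfc ψ (H i) (U k) - lam k • U k‖ - ‖T (U k) - lam k • U k‖)]
  · rw [Finset.sum_const, Finset.card_range, nsmul_eq_mul]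
    have : B - A = (n + 1) * δ := by linarith
    rw [this]
    nlinarith [sq_nonneg δ]
  · exact op_sumsq T hTsa n P hPc hP0 hP1 v

open Polynomial in
lemma stage3 {ι : Type*} (l : Filter ι) (S : ι → 𝓗 →L[ℂ] 𝓗) (T : 𝓗 →L[ℂ] 𝓗) (C : ℝ)
    (hC : ∀ i, ‖S i‖ ≤ C) (hS : ∀ v, Tendsto (fun i => S i v) l (𝓝 (T v))) (p : ℝ[X]) :
    ∀ v, Tendsto (fun i => aeval (S i) p v) l (𝓝 (aeval T p v)) := by
  have hpow : ∀ (n : ℕ) v, Tendsto (fun i => (S i ^ n) v) l (𝓝 ((T ^ n) v)) := by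
    intro n
    induction n with
    | zero => intro v; simpa using tendsto_const_nhds
    | succ n ih =>
      intro v
      have h1 : Tendsto (fun i => S i ((S i ^ n) v - (T ^ n) v)) l (𝓝 0) := by
        have h0 : Tendsto (fun i => C * ‖(S i ^ n) v - (T ^ n) v‖) l (𝓝 0) := by
          simpa using (tendsto_iff_norm_sub_tendsto_zero.1 (ih v)).const_mul C
        refine squeeze_zero_norm (fun i => ?_) h0
        exact (S i).le_of_opNorm_le (hC i) _
      have h2 := h1.add (hS ((T ^ n) v))
      simp only [map_sub, sub_add_cancel, zero_add] at h2
      simpa only [pow_succ', mul_apply_eq_comp] using h2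
  induction p using Polynomial.induction_on' with
  | add p q hp hq =>
    intro v
    simpa only [map_add, add_apply] using (hp v).add (hq v)
  | monomial n a =>
    intro v
    have := (hpow n v).const_smul a
    simpa [aeval_monomial, Algebra.algebraMap_eq_smul_one] using this

end ops

/-- **Theorem 2.1.** Let `f` be a strictly convex continuous function on an interval `I`
and let `(Hᵢ)` be a net of self-adjoint bounded operators on a complex Hilbert space with
`σ(Hᵢ) ⊆ I`.  If `(Hᵢ)` converges weakly to a self-adjoint bounded operator `H` with
`σ(H) ⊆ I` and `(f(Hᵢ))` converges weakly to `f(H)`, then `(φ(Hᵢ))` converges strongly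
to `φ(H)` for every bounded continuous function `φ` on `I`. -/
theorem stmt_3 {𝓗 : Type*} [NormedAddCommGroup 𝓗] [InnerProductSpace ℂ 𝓗]
    [CompleteSpace 𝓗]
    {ι : Type*} (l : Filter ι) [l.NeBot]
    (I : Set ℝ) (hI : I.OrdConnected)
    (f : ℝ → ℝ) (hf : StrictConvexOn ℝ I f) (hfc : ContinuousOn f I)
    (H : ι → 𝓗 →L[ℂ] 𝓗) (hsa : ∀ i, IsSelfAdjoint (H i))
    (hspec : ∀ i, spectrum ℝ (H i) ⊆ I)
    (T : 𝓗 →L[ℂ] 𝓗) (hTsa : IsSelfAdjoint T) (hTspec : spectrum ℝ T ⊆ I)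
    (hWOT : ∀ v w : 𝓗, Tendsto (fun i => ⟪(H i) v, w⟫_ℂ) l (𝓝 ⟪T v, w⟫_ℂ))
    (hfWOT : ∀ v w : 𝓗,
      Tendsto (fun i => ⟪(cfc f (H i)) v, w⟫_ℂ) l (𝓝 ⟪(cfc f T) v, w⟫_ℂ))
    (φ : ℝ → ℝ) (hφc : ContinuousOn φ I) (hφb : ∃ C, ∀ x ∈ I, |φ x| ≤ C) :
    ∀ v : 𝓗, Tendsto (fun i => (cfc φ (H i)) v) l (𝓝 ((cfc φ T) v)) := by
  intro v
  rcases subsingleton_or_nontrivial 𝓗 with hsub | hnt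
  · have : (fun i => (cfc φ (H i)) v) = fun _ => (cfc φ T) v := by
      ext i
      exact Subsingleton.elim _ _
    rw [this]
    exact tendsto_const_nhds
  have hcpt : IsCompact (spectrum ℝ T) := ContinuousFunctionalCalculus.isCompact_spectrum T
  have hne : (spectrum ℝ T).Nonempty := CFC.spectrum_nonempty ℝ T hTsa
  obtain ⟨α, hα, hαle⟩ := hcpt.exists_isLeast hne
  obtain ⟨β, hβ, hβle⟩ := hcpt.exists_isGreatest hne
  have hαI := hTspec hα
  have hβI := hTspec hβ
  have hαβ : α ≤ β := hαle hβ
  -- a relative neighbourhood of the spectrum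
  have hBex : ∃ B ∈ I, β ≤ B ∧ ∃ r > 0, ∀ x ∈ I, x < β + r → x ≤ B := by
    by_cases h : ∃ x ∈ I, β < x
    · obtain ⟨x, hx, hbx⟩ := h
      exact ⟨x, hx, hbx.le, x - β, by linarith, fun y _ hy => by linarith⟩
    · push Not at h
      exact ⟨β, hβI, le_rfl, 1, one_pos, fun y hy _ => h y hy⟩
  have hAex : ∃ A ∈ I, A ≤ α ∧ ∃ r > 0, ∀ x ∈ I, α - r < x → A ≤ x := by
    by_cases h : ∃ x ∈ I, x < α
    · obtain ⟨x, hx, hbx⟩ := h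
      exact ⟨x, hx, hbx.le, α - x, by linarith, fun y _ hy => by linarith⟩
    · push Not at h
      exact ⟨α, hαI, le_rfl, 1, one_pos, fun y hy _ => h y hy⟩
  obtain ⟨B, hB, hβB, r1, hr1, hB1⟩ := hBex
  obtain ⟨A, hA, hAα, r2, hr2, hA1⟩ := hAex
  have hT : spectrum ℝ T ⊆ Set.Icc A B := fun x hx =>
    ⟨hAα.trans (hαle hx), (hβle hx).trans hβB⟩
  rcases eq_or_lt_of_le (show A ≤ B by linarith) with hABe | hAB
  · -- degenerate case: `I` is a point
    have hIs : ∀ x ∈ I, x = α := by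
      intro x hx
      have e1 : α = A := by linarith
      have e2 : β = A := by linarith
      rcases lt_trichotomy x α with h | h | h
      · exfalso
        have hm : max x (α - r2 / 2) ∈ I :=
          hI.out hx hαI ⟨le_max_left _ _, max_le h.le (by linarith)⟩
        have h1 := hA1 _ hm (lt_of_lt_of_le (by linarith) (le_max_right _ _))
        have h2 : max x (α - r2 / 2) < α := max_lt h (by linarith)
        linarith
      · exact h
      · exfalso
        have hm : min x (α + r1 / 2) ∈ I :=
          hI.out hαI hx ⟨le_min h.le (by linarith), min_le_left _ _⟩
        have h1 := hB1 _ hm (lt_of_le_of_lt (min_le_right _ _) (by linarith))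
        have h2 : α < min x (α + r1 / 2) := lt_min h (by linarith)
        linarith
    have key : ∀ S : 𝓗 →L[ℂ] 𝓗, IsSelfAdjoint S → spectrum ℝ S ⊆ I →
        cfc φ S = algebraMap ℝ _ (φ α) := by
      intro S hS hSI
      rw [← cfc_const (φ α) S]
      refine cfc_congr fun x hx => ?_
      simp only [hIs x (hSI hx)]
    have : (fun i => (cfc φ (H i)) v) = fun _ => (cfc φ T) v := by
      ext i
      rw [key _ (hsa i) (hspec i), key T hTsa hTspec]
    rw [this]
    exact tendsto_const_nhds
  have hII : Set.Icc A B ⊆ I := hI.out hA hB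
  set ψ : ℝ → ℝ := fun x => max A (min B x) with hψ
  have ψc : Continuous ψ := by fun_prop
  have ψm : ∀ x, ψ x ∈ Set.Icc A B := fun x =>
    ⟨le_max_left _ _, max_le hAB.le (min_le_left _ _)⟩
  have ψid : ∀ x ∈ Set.Icc A B, ψ x = x := by
    intro x hx
    simp only [ψ]
    rw [min_eq_right hx.2, max_eq_right hx.1]
  have hφψ : Continuous (fun x => φ (ψ x)) :=
    (hφc.mono hII).comp_continuous ψc ψm
  obtain ⟨C, hC⟩ := hφb
  have hC0 : 0 ≤ C := (abs_nonneg _).trans (hC A hA)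
  have hs2 := stage2 l I f hf hfc H hsa hspec T hTsa hWOT hfWOT A B hAB hA hB hT
  -- the tail
  have htail : Tendsto (fun i => cfc (fun x => φ x - φ (ψ x)) (H i) v) l (𝓝 0) := by
    have := stage1 l I f hf hfc H hsa hspec T hTsa hWOT hfWOT A B hAB hA hB hT (fun _ => 1)
      continuous_const α β (min r1 r2 / 2) (by positivity) (fun x hx _ => ⟨hαle hx, hβle hx⟩)
      (fun x => φ x - φ (ψ x)) (hφc.sub hφψ.continuousOn) ((2 * C) ^ 2) (by positivity) ?_ ?_ v
    · rwa [cfc_const_one ℝ T, one_apply_eq_self] at this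
    · intro x hx
      have h1 := abs_le.1 (hC x hx)
      have h2 := abs_le.1 (hC (ψ x) (hII (ψm x)))
      exact sq_le_sq' (by linarith [h1.1, h2.2]) (by linarith [h1.2, h2.1])
    · intro x hx h1 h2
      have q1 := min_le_left r1 r2
      have q2 := min_le_right r1 r2
      rw [ψid x ⟨hA1 x hx (by linarith), hB1 x hx (by linarith)⟩, sub_self]
  -- the main part
  have hmain : Tendsto (fun i => cfc (fun x => φ (ψ x)) (H i) v) l (𝓝 (cfc φ T v)) := by
    rw [tendsto_iff_norm_sub_tendsto_zero, tendsto_order]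
    refine ⟨fun e he => Eventually.of_forall fun i => he.trans_le (norm_nonneg _), fun e he => ?_⟩
    set ε := e / (3 * (‖v‖ + 1)) with hε
    have hε0 : 0 < ε := by positivity
    have hεv : ε * ‖v‖ < e / 2 := by
      have : ε * (‖v‖ + 1) = e / 3 := by rw [hε]; field_simp
      nlinarith
    have hεv3 : ε * ‖v‖ ≤ e / 3 := by
      have : ε * (‖v‖ + 1) = e / 3 := by rw [hε]; field_simp
      nlinarith
    obtain ⟨p, hp⟩ := exists_polynomial_near_of_continuousOn A B φ (hφc.mono hII) ε hε0
    have hnorm : ∀ i, ‖cfc ψ (H i)‖ ≤ max |A| |B| := by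
      intro i
      refine norm_cfc_le (by positivity) fun x _ => ?_
      exact abs_le_max_abs_abs (ψm x).1 (ψm x).2
    have hp3 := stage3 l (fun i => cfc ψ (H i)) T _ hnorm hs2 p v
    have d1 : ∀ i, ‖cfc (fun x => φ (ψ x)) (H i) v - Polynomial.aeval (cfc ψ (H i)) p v‖ ≤ e / 3 := by
      intro i
      rw [← cfc_map_polynomial p ψ (H i) (hsa i) ψc.continuousOn, ← sub_apply,
        ← cfc_sub (fun x => φ (ψ x)) (fun x => p.eval (ψ x)) (H i) hφψ.continuousOn (by fun_prop)]
      refine (ContinuousLinearMap.le_of_opNorm_le _ (norm_cfc_le hε0.le fun x _ => ?_) v).trans hεv3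
      rw [Real.norm_eq_abs, abs_sub_comm]
      exact (hp _ (ψm x)).le
    have d2 : ‖Polynomial.aeval T p v - cfc φ T v‖ ≤ e / 3 := by
      rw [← cfc_polynomial p T hTsa, ← sub_apply,
        ← cfc_sub (fun x => p.eval x) φ T (by fun_prop) (hφc.mono hTspec)]
      refine (ContinuousLinearMap.le_of_opNorm_le _ (norm_cfc_le hε0.le fun x hx => ?_) v).trans hεv3
      exact (hp _ (hT hx)).le
    have d3 := (tendsto_iff_norm_sub_tendsto_zero.1 hp3).eventually
      (gt_mem_nhds (show (0 : ℝ) < e / 3 by positivity))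
    filter_upwards [d3] with i hi
    have := norm_sub_le_norm_sub_add_norm_sub (cfc (fun x => φ (ψ x)) (H i) v)
      (Polynomial.aeval (cfc ψ (H i)) p v) (cfc φ T v)
    have h2 := norm_sub_le_norm_sub_add_norm_sub (Polynomial.aeval (cfc ψ (H i)) p v)
      (Polynomial.aeval T p v) (cfc φ T v)
    linarith [d1 i]
  have hsum := htail.add hmain
  rw [zero_add] at hsum
  refine hsum.congr fun i => ?_
  rw [cfc_sub φ (fun x => φ (ψ x)) (H i) (hφc.mono (hspec i)) hφψ.continuousOn, sub_apply,
    sub_add_cancel]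
end

section
/- Let I ⊆ ℝ be an interval, let f : I → ℝ be a strictly convex continuous function, let 𝓗 be a complex Hilbert space, and let (Hᵢ)_{i∈ι} be a net of self-adjoint bounded operators on 𝓗 with σ(Hᵢ) ⊆ I for all i, which is bounded in operator norm. If (Hᵢ) converges in the weak operator topology to a self-adjoint bounded operator H with σ(H) ⊆ I, and (f(Hᵢ)) converges in the weak operator topology to f(H), then (Hᵢ) converges in the strong operator topology to H. -/
set_option synthInstance.maxHeartbeats 400000
set_option maxHeartbeats 800000

open scoped InnerProductSpace
open Filter Topology

section helpers
variable {𝓗 : Type*} [NormedAddCommGroup 𝓗] [InnerProductSpace ℂ 𝓗] [CompleteSpace 𝓗]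

/-- Quadratic form of `g(A)`. -/
noncomputable def QF (g : ℝ → ℝ) (A : 𝓗 →L[ℂ] 𝓗) (u : 𝓗) : ℝ := (⟪(cfc g A) u, u⟫_ℂ).re

theorem cfc_inner_symm (g : ℝ → ℝ) (A : 𝓗 →L[ℂ] 𝓗) (u w : 𝓗) :
    ⟪(cfc g A) u, w⟫_ℂ = ⟪u, (cfc g A) w⟫_ℂ := by
  have h : IsSelfAdjoint (cfc g A) := cfc_predicate g A
  exact (ContinuousLinearMap.isSelfAdjoint_iff_isSymmetric.mp h) u w

theorem cfc_mul_apply {g k : ℝ → ℝ} {A : 𝓗 →L[ℂ] 𝓗}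
    (hg : ContinuousOn g (spectrum ℝ A)) (hk : ContinuousOn k (spectrum ℝ A)) (u : 𝓗) :
    (cfc (fun x => g x * k x) A) u = (cfc g A) ((cfc k A) u) := by
  rw [cfc_mul g k A hg hk]; rfl

theorem cfc_sub_apply {g k : ℝ → ℝ} {A : 𝓗 →L[ℂ] 𝓗}
    (hg : ContinuousOn g (spectrum ℝ A)) (hk : ContinuousOn k (spectrum ℝ A)) (u : 𝓗) :
    (cfc (fun x => g x - k x) A) u = (cfc g A) u - (cfc k A) u := by
  rw [cfc_sub g k A hg hk]; rfl

theorem cfc_add_apply {g k : ℝ → ℝ} {A : 𝓗 →L[ℂ] 𝓗}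
    (hg : ContinuousOn g (spectrum ℝ A)) (hk : ContinuousOn k (spectrum ℝ A)) (u : 𝓗) :
    (cfc (fun x => g x + k x) A) u = (cfc g A) u + (cfc k A) u := by
  rw [cfc_add A g k hg hk]; rfl

theorem cfc_sum_apply {κ : Type*} (s : Finset κ) {g : κ → ℝ → ℝ} {A : 𝓗 →L[ℂ] 𝓗}
    (hg : ∀ k ∈ s, ContinuousOn (g k) (spectrum ℝ A)) (u : 𝓗) :
    (cfc (fun x => ∑ k ∈ s, g k x) A) u = ∑ k ∈ s, (cfc (g k) A) u := by
  have h : (fun x => ∑ k ∈ s, g k x) = ∑ k ∈ s, g k := by ext x; simp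
  rw [h, cfc_sum g A s hg]; simp

theorem cfc_const_mul_apply (c : ℝ) {g : ℝ → ℝ} {A : 𝓗 →L[ℂ] 𝓗}
    (hg : ContinuousOn g (spectrum ℝ A)) (u : 𝓗) :
    (cfc (fun x => c * g x) A) u = c • (cfc g A) u := by
  rw [cfc_const_mul c g A hg]; rfl

theorem cfc_const_apply (c : ℝ) {A : 𝓗 →L[ℂ] 𝓗} (hA : IsSelfAdjoint A) (u : 𝓗) :
    (cfc (fun _ : ℝ => c) A) u = c • u := by
  rw [cfc_const c A hA, Algebra.algebraMap_eq_smul_one]; rfl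

theorem cfc_id_apply' {A : 𝓗 →L[ℂ] 𝓗} (hA : IsSelfAdjoint A) (u : 𝓗) :
    (cfc (fun x : ℝ => x) A) u = A u := by
  rw [cfc_id' ℝ A hA]

theorem QF_conj {p g : ℝ → ℝ} {A : 𝓗 →L[ℂ] 𝓗}
    (hp : ContinuousOn p (spectrum ℝ A)) (hg : ContinuousOn g (spectrum ℝ A)) (v : 𝓗) :
    QF g A ((cfc p A) v) = QF (fun x => p x * (g x * p x)) A v := by
  unfold QF
  rw [cfc_mul_apply hp (hg.fun_mul hp), cfc_mul_apply hg hp, cfc_inner_symm p A]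

theorem QF_one {A : 𝓗 →L[ℂ] 𝓗} (hA : IsSelfAdjoint A) (v : 𝓗) :
    QF (fun _ => 1) A v = ‖v‖ ^ 2 := by
  unfold QF
  rw [cfc_const_apply 1 hA, one_smul]
  exact inner_self_eq_norm_sq (𝕜 := ℂ) v

theorem QF_norm {g : ℝ → ℝ} {A : 𝓗 →L[ℂ] 𝓗}
    (hg : ContinuousOn g (spectrum ℝ A)) (v : 𝓗) :
    ‖(cfc g A) v‖ ^ 2 = QF (fun x => g x * g x) A v := by
  unfold QF
  rw [cfc_mul_apply hg hg, cfc_inner_symm g A ((cfc g A) v)]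
  exact (inner_self_eq_norm_sq (𝕜 := ℂ) _).symm

theorem QF_nonneg {g : ℝ → ℝ} {A : 𝓗 →L[ℂ] 𝓗}
    (hg : ContinuousOn g (spectrum ℝ A)) (h0 : ∀ x ∈ spectrum ℝ A, 0 ≤ g x) (v : 𝓗) :
    0 ≤ QF g A v := by
  have h1 : ContinuousOn (fun x => √(g x)) (spectrum ℝ A) := hg.sqrt
  have h2 : QF g A v = QF (fun x => √(g x) * √(g x)) A v := by
    unfold QF
    rw [cfc_congr (f := g) (g := fun x => √(g x) * √(g x))
      (fun x hx => (Real.mul_self_sqrt (h0 x hx)).symm)]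
  rw [h2, ← QF_norm h1]
  positivity

theorem QF_sub {g k : ℝ → ℝ} {A : 𝓗 →L[ℂ] 𝓗}
    (hg : ContinuousOn g (spectrum ℝ A)) (hk : ContinuousOn k (spectrum ℝ A)) (v : 𝓗) :
    QF (fun x => g x - k x) A v = QF g A v - QF k A v := by
  unfold QF
  rw [cfc_sub_apply hg hk, inner_sub_left, Complex.sub_re]

theorem QF_mono {g k : ℝ → ℝ} {A : 𝓗 →L[ℂ] 𝓗}
    (hg : ContinuousOn g (spectrum ℝ A)) (hk : ContinuousOn k (spectrum ℝ A))
    (h : ∀ x ∈ spectrum ℝ A, g x ≤ k x) (v : 𝓗) : QF g A v ≤ QF k A v := by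
  have := QF_nonneg (hk.fun_sub hg) (fun x hx => sub_nonneg.mpr (h x hx)) v
  rw [QF_sub hk hg] at this
  linarith

theorem QF_const_mul (c : ℝ) {g : ℝ → ℝ} {A : 𝓗 →L[ℂ] 𝓗}
    (hg : ContinuousOn g (spectrum ℝ A)) (v : 𝓗) :
    QF (fun x => c * g x) A v = c * QF g A v := by
  unfold QF
  rw [cfc_const_mul_apply c hg, ← Complex.coe_smul, inner_smul_left]
  simp

theorem QF_sum {κ : Type*} (s : Finset κ) {g : κ → ℝ → ℝ} {A : 𝓗 →L[ℂ] 𝓗}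
    (hg : ∀ k ∈ s, ContinuousOn (g k) (spectrum ℝ A)) (v : 𝓗) :
    QF (fun x => ∑ k ∈ s, g k x) A v = ∑ k ∈ s, QF (g k) A v := by
  unfold QF
  rw [cfc_sum_apply s hg, sum_inner, Complex.re_sum]

theorem cfc_norm_le {g : ℝ → ℝ} {A : 𝓗 →L[ℂ] 𝓗} (hA : IsSelfAdjoint A)
    (hg : ContinuousOn g (spectrum ℝ A)) (h : ∀ x ∈ spectrum ℝ A, |g x| ≤ 1) (v : 𝓗) :
    ‖(cfc g A) v‖ ≤ ‖v‖ := by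
  have h1 : ‖(cfc g A) v‖ ^ 2 ≤ ‖v‖ ^ 2 := by
    rw [QF_norm hg, ← QF_one hA]
    refine QF_mono (hg.fun_mul hg) continuousOn_const (fun x hx => ?_) v
    have := h x hx
    rw [← abs_mul_abs_self (g x)]
    nlinarith [abs_nonneg (g x)]
  exact le_of_sq_le_sq h1 (norm_nonneg _)

theorem QF_tendsto {ι : Type*} {l : Filter ι} {I : Set ℝ} {f : ℝ → ℝ} (hfc : ContinuousOn f I)
    {H : ι → 𝓗 →L[ℂ] 𝓗} (hsa : ∀ i, IsSelfAdjoint (H i))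
    (hspec : ∀ i, spectrum ℝ (H i) ⊆ I)
    {T : 𝓗 →L[ℂ] 𝓗} (hTsa : IsSelfAdjoint T) (hTspec : spectrum ℝ T ⊆ I)
    (hWOT : ∀ v w : 𝓗, Tendsto (fun i => ⟪(H i) v, w⟫_ℂ) l (𝓝 ⟪T v, w⟫_ℂ))
    (hfWOT : ∀ v w : 𝓗,
      Tendsto (fun i => ⟪(cfc f (H i)) v, w⟫_ℂ) l (𝓝 ⟪(cfc f T) v, w⟫_ℂ))
    (a b : ℝ) (u : 𝓗) :
    Tendsto (fun i => QF (fun x => f x - (a * x + b)) (H i) u) l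
      (𝓝 (QF (fun x => f x - (a * x + b)) T u)) := by
  have key : ∀ A : 𝓗 →L[ℂ] 𝓗, IsSelfAdjoint A → spectrum ℝ A ⊆ I →
      QF (fun x => f x - (a * x + b)) A u
        = (⟪(cfc f A) u, u⟫_ℂ).re - (a * (⟪A u, u⟫_ℂ).re + b * ‖u‖ ^ 2) := by
    intro A hA hs
    have c1 : ContinuousOn (fun x : ℝ => a * x) (spectrum ℝ A) := by fun_prop
    have c2 : ContinuousOn (fun x : ℝ => b) (spectrum ℝ A) := by fun_prop
    unfold QF
    rw [cfc_sub_apply (hfc.mono hs) (c1.fun_add c2), cfc_add_apply c1 c2,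
      cfc_const_mul_apply a (by fun_prop), cfc_id_apply' hA, cfc_const_apply b hA,
      inner_sub_left, inner_add_left, ← Complex.coe_smul, ← Complex.coe_smul,
      inner_smul_left, inner_smul_left]
    have : (⟪u, u⟫_ℂ).re = ‖u‖ ^ 2 := inner_self_eq_norm_sq (𝕜 := ℂ) u
    simp only [Complex.sub_re, Complex.add_re, Complex.conj_ofReal, Complex.re_ofReal_mul, this]
  rw [key T hTsa hTspec]
  simp_rw [fun i => key (H i) (hsa i) (hspec i)]
  have t1 := (Complex.continuous_re.tendsto _).comp (hfWOT u u)
  have t2 := (Complex.continuous_re.tendsto _).comp (hWOT u u)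
  exact t1.sub ((t2.const_mul a).add_const _)

end helpers

section realpart

theorem conv3 {I : Set ℝ} {f : ℝ → ℝ} (hf : StrictConvexOn ℝ I f) {x y z : ℝ}
    (hx : x ∈ I) (hz : z ∈ I) (hxy : x ≤ y) (hyz : y ≤ z) :
    (z - x) * f y ≤ (z - y) * f x + (y - x) * f z := by
  rcases eq_or_lt_of_le (hxy.trans hyz) with h | h
  · have : y = x := le_antisymm (by linarith) hxy
    subst this; subst h; simp
  · have h0 : 0 < z - x := by linarith
    have := hf.convexOn.2 hx hz
      (show 0 ≤ (z - y) / (z - x) from div_nonneg (by linarith) h0.le)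
      (show 0 ≤ (y - x) / (z - x) from div_nonneg (by linarith) h0.le)
      (by field_simp; ring)
    have e : ((z - y) / (z - x)) • x + ((y - x) / (z - x)) • z = y := by
      simp only [smul_eq_mul]; field_simp; ring
    rw [e] at this
    simp only [smul_eq_mul] at this
    calc (z - x) * f y ≤ (z - x) * ((z - y) / (z - x) * f x + (y - x) / (z - x) * f z) :=
          mul_le_mul_of_nonneg_left this h0.le
      _ = _ := by field_simp

theorem mid_pos {I : Set ℝ} {f : ℝ → ℝ} (hf : StrictConvexOn ℝ I f) {p r : ℝ}
    (hp : p ∈ I) (hr : r ∈ I) (hpr : p < r) : 0 < f r + f p - 2 * f ((p + r) / 2) := by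
  have := hf.2 hp hr hpr.ne (show (0 : ℝ) < 1 / 2 by norm_num)
    (show (0 : ℝ) < 1 / 2 by norm_num) (by norm_num)
  simp only [smul_eq_mul] at this
  rw [show 1 / 2 * p + 1 / 2 * r = (p + r) / 2 by ring] at this
  linarith

theorem line_facts {I : Set ℝ} (hI : I.OrdConnected) {f : ℝ → ℝ} (hf : StrictConvexOn ℝ I f)
    {c h : ℝ} (hh : 0 < h) (h1 : c - h ∈ I) (h2 : c + h ∈ I) :
    ∃ s b : ℝ, 0 < f (c + h) + f (c - h) - 2 * f c ∧
      (∀ x ∈ Set.Icc (c - h) (c + h), f x - (s * x + b) ≤ f (c + h) + f (c - h) - 2 * f c) ∧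
      (∀ x ∈ I, -(f (c + h) + f (c - h) - 2 * f c) ≤ f x - (s * x + b)) ∧
      (∀ p r x, p ∈ I → r ∈ I → x ∈ I → c ≤ p → c + h ≤ (p + r) / 2 → p < r → r ≤ x →
        f r + f p - 2 * f ((p + r) / 2) ≤ f x - (s * x + b)) := by
  have hc : c ∈ I := hI.out h1 h2 ⟨by linarith, by linarith⟩
  set s := (f (c + h) - f c) / h with hs
  have hsh : s * h = f (c + h) - f c := by rw [hs]; field_simp
  set b := f c - s * c with hb
  have hd := mid_pos hf h1 h2 (by linarith)
  rw [show (c - h + (c + h)) / 2 = c by ring] at hd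
  set d := f (c + h) + f (c - h) - 2 * f c with hdd
  set F : ℝ → ℝ := fun x => f x - (s * x + b) with hF
  have F3 : ∀ x y z, x ∈ I → z ∈ I → x ≤ y → y ≤ z →
      (z - x) * F y ≤ (z - y) * F x + (y - x) * F z := by
    intro x y z hx hz hxy hyz
    have := conv3 hf hx hz hxy hyz
    simp only [hF]
    nlinarith
  have F0 : F c = 0 := by simp only [hF, hb]; ring
  have F1 : F (c + h) = 0 := by
    simp only [hF, hb]
    linear_combination -hsh
  have F2 : F (c - h) = d := by
    simp only [hF, hb, hdd]
    linear_combination hsh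
  have Fr : ∀ x ∈ I, c + h ≤ x → 0 ≤ F x := by
    intro x hx hcx
    have := F3 c (c + h) x hc hx (by linarith) hcx
    rw [F0, F1] at this
    by_contra hneg
    push Not at hneg
    nlinarith
  refine ⟨s, b, hd, ?_, ?_, ?_⟩
  · rintro x ⟨hx1, hx2⟩
    change F x ≤ d
    rcases le_total x c with hxc | hxc
    · have := F3 (c - h) x c h1 hc hx1 hxc
      rw [F0, F2] at this
      by_contra hneg
      push Not at hneg
      nlinarith
    · have := F3 c x (c + h) hc h2 hxc hx2
      rw [F0, F1] at this
      by_contra hneg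
      push Not at hneg
      nlinarith
  · intro x hx
    change -d ≤ F x
    rcases le_total x c with hxc | hxc
    · have := F3 x c (c + h) hx h2 hxc (by linarith)
      rw [F0, F1] at this
      by_contra hneg
      push Not at hneg
      nlinarith
    · rcases le_total (c + h) x with hxc2 | hxc2
      · linarith [Fr x hx hxc2]
      · have := F3 (c - h) c x h1 hx (by linarith) hxc
        rw [F0, F2] at this
        by_contra hneg
        push Not at hneg
        nlinarith
  · intro p r x hp hr hx hcp hcq hpr hrx
    have e : f r + f p - 2 * f ((p + r) / 2) = F r + F p - 2 * F ((p + r) / 2) := by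
      simp only [hF]; ring
    rw [e]
    change _ ≤ F x
    set q := (p + r) / 2 with hq
    have hqI : q ∈ I := hI.out hp hr ⟨by linarith, by linarith⟩
    have Fq := Fr q hqI hcq
    have a1 := F3 c p q hc hqI hcp (by linarith)
    rw [F0] at a1
    have a2 : F p ≤ F q := by
      by_contra hneg
      push Not at hneg
      have : 0 < q - c := by linarith
      nlinarith
    have hmu := mid_pos hf hp hr hpr
    rw [e] at hmu
    have a3 := F3 q r x hqI hx (by linarith) hrx
    by_contra hneg
    push Not at hneg
    have : 0 < r - q := by linarith
    nlinarith

/-- A ramp from `0` to `1` on `[a, a + δ]`. -/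
noncomputable def st (a δ x : ℝ) : ℝ := max 0 (min 1 ((x - a) / δ))

theorem st_cont (a δ : ℝ) : Continuous (st a δ) := by unfold st; fun_prop

theorem st_nonneg (a δ x : ℝ) : 0 ≤ st a δ x := le_max_left _ _

theorem st_le_one (a δ x : ℝ) : st a δ x ≤ 1 := max_le zero_le_one (min_le_left _ _)

theorem st_zero {a δ x : ℝ} (hδ : 0 < δ) (h : x ≤ a) : st a δ x = 0 := by
  unfold st
  have : (x - a) / δ ≤ 0 := div_nonpos_of_nonpos_of_nonneg (by linarith) hδ.le
  exact max_eq_left ((min_le_right _ _).trans this)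

theorem st_one {a δ x : ℝ} (hδ : 0 < δ) (h : a + δ ≤ x) : st a δ x = 1 := by
  unfold st
  have : 1 ≤ (x - a) / δ := by rw [le_div_iff₀ hδ]; linarith
  rw [min_eq_left this]; simp

theorem st_mid {a δ x : ℝ} (hδ : 0 < δ) (h0 : a ≤ x) (h : x ≤ a + δ) :
    δ * st a δ x = x - a := by
  unfold st
  have h1 : (x - a) / δ ≤ 1 := by rw [div_le_one hδ]; linarith
  have h2 : 0 ≤ (x - a) / δ := div_nonneg (by linarith) hδ.le
  rw [min_eq_right h1, max_eq_right h2]; field_simp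

theorem st_anti {a b δ x : ℝ} (hδ : 0 < δ) (h : a ≤ b) : st b δ x ≤ st a δ x := by
  unfold st
  gcongr

theorem st_sum {a δ : ℝ} (hδ : 0 < δ) (N : ℕ) {x : ℝ} (h0 : a ≤ x) (h : x ≤ a + N * δ) :
    δ * ∑ j ∈ Finset.range N, st (a + j * δ) δ x = x - a := by
  have key : ∀ M : ℕ, δ * ∑ j ∈ Finset.range M, st (a + j * δ) δ x = min (x - a) (M * δ) := by
    intro M
    induction M with
    | zero => simp [h0]
    | succ M ih =>
      rw [Finset.sum_range_succ, mul_add, ih]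
      push_cast
      rcases le_total x (a + M * δ) with h1 | h1
      · rw [st_zero hδ h1, min_eq_left (by linarith), min_eq_left (by linarith)]; ring
      · rcases le_total x (a + M * δ + δ) with h2 | h2
        · rw [st_mid hδ h1 h2, min_eq_right (by linarith), min_eq_left (by linarith)]; ring
        · rw [st_one hδ h2, min_eq_right (by linarith), min_eq_right (by linarith)]; ring
  rw [key N, min_eq_left (by linarith)]

/-- Auxiliary ramps, the first one replaced by `1`. -/
noncomputable def tt (a δ : ℝ) (k : ℕ) (x : ℝ) : ℝ := if k = 0 then 1 else st (a + k * δ) δ x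

theorem tt_cont (a δ : ℝ) (k : ℕ) : Continuous (tt a δ k) := by
  unfold tt
  split_ifs
  · exact continuous_const
  · exact st_cont _ _

theorem tt_nonneg (a δ : ℝ) (k : ℕ) (x : ℝ) : 0 ≤ tt a δ k x := by
  unfold tt; split_ifs
  · norm_num
  · exact st_nonneg _ _ _

theorem tt_le_one (a δ : ℝ) (k : ℕ) (x : ℝ) : tt a δ k x ≤ 1 := by
  unfold tt; split_ifs
  · norm_num
  · exact st_le_one _ _ _

theorem tt_anti {a δ : ℝ} (hδ : 0 < δ) (k : ℕ) (x : ℝ) : tt a δ (k + 1) x ≤ tt a δ k x := by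
  unfold tt
  rw [if_neg (Nat.succ_ne_zero k)]
  split_ifs
  · exact st_le_one _ _ _
  · apply st_anti hδ
    push_cast; nlinarith

/-- The hat functions. -/
noncomputable def hat (a δ : ℝ) (k : ℕ) (x : ℝ) : ℝ := tt a δ k x - tt a δ (k + 1) x

theorem hat_cont (a δ : ℝ) (k : ℕ) : Continuous (hat a δ k) :=
  (tt_cont a δ k).sub (tt_cont a δ (k + 1))

theorem hat_nonneg {a δ : ℝ} (hδ : 0 < δ) (k : ℕ) (x : ℝ) : 0 ≤ hat a δ k x :=
  sub_nonneg.mpr (tt_anti hδ k x)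

theorem hat_le_one (a δ : ℝ) (k : ℕ) (x : ℝ) : hat a δ k x ≤ 1 := by
  unfold hat
  linarith [tt_le_one a δ k x, tt_nonneg a δ (k + 1) x]

theorem hat_sum (a δ : ℝ) (n : ℕ) (x : ℝ) :
    ∑ k ∈ Finset.range n, hat a δ k x = 1 - tt a δ n x := by
  unfold hat
  rw [Finset.sum_range_sub']
  simp [tt]

theorem hat_supp {a δ : ℝ} (hδ : 0 < δ) (k : ℕ) {x : ℝ} (hx : a ≤ x) (h : hat a δ k x ≠ 0) :
    x ∈ Set.Icc (a + (k + 1) * δ - δ) (a + (k + 1) * δ + δ) := by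
  constructor
  · by_contra hneg
    push Not at hneg
    apply h
    unfold hat tt
    have hk : k ≠ 0 := by
      rintro rfl
      simp at hneg; linarith
    rw [if_neg hk, if_neg (Nat.succ_ne_zero k), st_zero hδ (by nlinarith),
      st_zero hδ (by push_cast; nlinarith)]
    simp
  · by_contra hneg
    push Not at hneg
    apply h
    unfold hat tt
    have e1 : st (a + ((k + 1 : ℕ) : ℝ) * δ) δ x = 1 := st_one hδ (by push_cast; linarith)
    have e2 : st (a + (k : ℝ) * δ) δ x = 1 := st_one hδ (by nlinarith)
    rw [if_neg (Nat.succ_ne_zero k), e1, e2]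
    simp

end realpart

section loc
variable {𝓗 : Type*} [NormedAddCommGroup 𝓗] [InnerProductSpace ℂ 𝓗] [CompleteSpace 𝓗]

theorem norm_sum_sq_le {n : ℕ} (x : ℕ → 𝓗) (d : ℕ → ℝ) (hd : ∀ k ∈ Finset.range n, 0 < d k) :
    ‖∑ k ∈ Finset.range n, x k‖ ^ 2
      ≤ (∑ k ∈ Finset.range n, d k) * ∑ k ∈ Finset.range n, ‖x k‖ ^ 2 / d k := by
  have h1 : ‖∑ k ∈ Finset.range n, x k‖ ^ 2 ≤ (∑ k ∈ Finset.range n, ‖x k‖) ^ 2 := by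
    gcongr
    exact norm_sum_le _ _
  refine h1.trans ?_
  refine Finset.sum_sq_le_sum_mul_sum_of_sq_le_mul _ (fun k hk => (hd k hk).le)
    (fun k hk => div_nonneg (sq_nonneg _) (hd k hk).le) (fun k hk => ?_)
  have := (hd k hk).ne'
  apply le_of_eq
  field_simp

theorem loc_core {ι : Type*} {l : Filter ι} {I : Set ℝ} (hI : I.OrdConnected)
    {f : ℝ → ℝ} (hf : StrictConvexOn ℝ I f) (hfc : ContinuousOn f I)
    {H : ι → 𝓗 →L[ℂ] 𝓗} (hsa : ∀ i, IsSelfAdjoint (H i))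
    (hspec : ∀ i, spectrum ℝ (H i) ⊆ I)
    {T : 𝓗 →L[ℂ] 𝓗} (hTsa : IsSelfAdjoint T) (hTspec : spectrum ℝ T ⊆ I)
    (hWOT : ∀ v w : 𝓗, Tendsto (fun i => ⟪(H i) v, w⟫_ℂ) l (𝓝 ⟪T v, w⟫_ℂ))
    (hfWOT : ∀ v w : 𝓗,
      Tendsto (fun i => ⟪(cfc f (H i)) v, w⟫_ℂ) l (𝓝 ⟪(cfc f T) v, w⟫_ℂ))
    {p r α h : ℝ} (hpr : p < r) (hp : p ∈ I) (hr : r ∈ I) (hα : α ∈ I) (hh : 0 < h)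
    {n : ℕ} (hn : n ≠ 0) (hpn : p = α + n * h) (hhq : p + h ≤ (p + r) / 2)
    (hαT : ∀ y ∈ spectrum ℝ T, α ≤ y)
    {g φ : ℝ → ℝ} (hg : Continuous g) (hφ : Continuous φ)
    (hg1 : ∀ x, |g x| ≤ 1) (hφ1 : ∀ x, |φ x| ≤ 1)
    (hg0 : ∀ x, x ≤ r → g x = 0) (hφ0 : ∀ x, p ≤ x → φ x = 0) (v : 𝓗) {ε : ℝ} (hε : 0 < ε) :
    ∀ᶠ i in l, ‖(cfc g (H i)) ((cfc φ T) v)‖ ^ 2 <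
      2 * (f r + f p - 2 * f ((p + r) / 2))⁻¹ * ((f (p + h) - f p) - (f (α + h) - f α)) * ‖v‖ ^ 2
        + ε := by
  set μ := f r + f p - 2 * f ((p + r) / 2) with hμ
  have hμ0 : 0 < μ := mid_pos hf hp hr hpr
  set c : ℕ → ℝ := fun k => α + (k + 1) * h with hc
  set d : ℕ → ℝ := fun k => f (c k + h) + f (c k - h) - 2 * f (c k) with hd
  have hkn : ∀ k ∈ Finset.range n, c k ≤ p := by
    intro k hk
    have : ((k : ℝ) + 1) ≤ n := by exact_mod_cast Finset.mem_range.mp hk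
    simp only [hc]
    rw [hpn]
    nlinarith
  have hck : ∀ k : ℕ, α ≤ c k - h := by
    intro k
    have : (0 : ℝ) ≤ k := Nat.cast_nonneg k
    simp only [hc]
    nlinarith
  have hin1 : ∀ k ∈ Finset.range n, c k - h ∈ I := fun k hk =>
    hI.out hα hr ⟨hck k, by linarith [hkn k hk]⟩
  have hin2 : ∀ k ∈ Finset.range n, c k + h ∈ I := fun k hk =>
    hI.out hα hr ⟨by linarith [hck k], by linarith [hkn k hk]⟩
  have hL : ∀ k : ℕ, ∃ s b : ℝ, k ∈ Finset.range n → 0 < d k ∧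
      (∀ x ∈ Set.Icc (c k - h) (c k + h), f x - (s * x + b) ≤ d k) ∧
      (∀ x ∈ I, -(d k) ≤ f x - (s * x + b)) ∧
      (∀ x ∈ I, r ≤ x → μ ≤ f x - (s * x + b)) := by
    intro k
    by_cases hk : k ∈ Finset.range n
    · obtain ⟨s, b, q1, q2, q3, q4⟩ := line_facts hI hf hh (hin1 k hk) (hin2 k hk)
      exact ⟨s, b, fun _ => ⟨q1, q2, q3, fun x hx hrx =>
        q4 p r x hp hr hx (hkn k hk) (by linarith [hkn k hk]) hpr hrx⟩⟩
    · exact ⟨0, 0, fun h => absurd h hk⟩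
  choose s b hsb using hL
  set D : ℕ → ℝ → ℝ := fun k x => f x - (s k * x + (b k - d k)) with hD
  have hDc : ∀ (k : ℕ) (S : Set ℝ), S ⊆ I → ContinuousOn (D k) S := by
    intro k S hS
    have := hfc.mono hS
    simp only [hD]
    fun_prop
  have hD0 : ∀ k ∈ Finset.range n, ∀ x ∈ I, 0 ≤ D k x := by
    intro k hk x hx
    have := (hsb k hk).2.2.1 x hx
    simp only [hD]; linarith
  have hDμ : ∀ k ∈ Finset.range n, ∀ x ∈ I, r ≤ x → μ ≤ D k x := by
    intro k hk x hx hrx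
    have h1 := (hsb k hk).2.2.2 x hx hrx
    have h2 := (hsb k hk).1
    simp only [hD]; linarith
  have hD2 : ∀ k ∈ Finset.range n, ∀ x ∈ Set.Icc (c k - h) (c k + h), D k x ≤ 2 * d k := by
    intro k hk x hx
    have := (hsb k hk).2.1 x hx
    simp only [hD]; linarith
  have hdpos : ∀ k ∈ Finset.range n, 0 < d k := fun k hk => (hsb k hk).1
  have hsumd : ∑ k ∈ Finset.range n, d k = (f (p + h) - f p) - (f (α + h) - f α) := by
    have e : ∀ k ∈ Finset.range n, d k =
        (fun j : ℕ => f (α + (j + 1) * h) - f (α + j * h)) (k + 1) -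
        (fun j : ℕ => f (α + (j + 1) * h) - f (α + j * h)) k := by
      intro k _
      simp only [hd, hc]
      push_cast
      rw [show α + (k + 1) * h + h = α + (k + 1 + 1) * h by ring,
        show α + (k + 1) * h - h = α + k * h by ring]
      ring
    rw [Finset.sum_congr rfl e,
      Finset.sum_range_sub (fun j : ℕ => f (α + (j + 1) * h) - f (α + j * h)) n, hpn]
    simp only [Nat.cast_zero]
    rw [show α + n * h + h = α + (n + 1) * h by ring]
    simp
  set u : ℕ → 𝓗 := fun k => (cfc (fun x => hat α h k x * φ x) T) v with hu
  have hcont : ∀ k, Continuous (fun x => hat α h k x * φ x) := fun k => (hat_cont α h k).mul hφ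
  have husum : (cfc φ T) v = ∑ k ∈ Finset.range n, u k := by
    simp only [hu]
    rw [← cfc_sum_apply (Finset.range n) (fun k _ => (hcont k).continuousOn)]
    congr 1
    refine cfc_congr (fun x _ => ?_)
    rw [← Finset.sum_mul, hat_sum]
    rcases le_total p x with hx | hx
    · rw [hφ0 x hx]; simp
    · have : tt α h n x = 0 := by
        unfold tt
        rw [if_neg hn]
        exact st_zero hh (by linarith)
      rw [this]; simp
  -- bound for each `i`
  have hbound : ∀ i, ‖(cfc g (H i)) ((cfc φ T) v)‖ ^ 2 ≤
      (∑ k ∈ Finset.range n, d k) *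
        ∑ k ∈ Finset.range n, μ⁻¹ * QF (D k) (H i) (u k) / d k := by
    intro i
    rw [husum, map_sum]
    refine (norm_sum_sq_le _ d hdpos).trans ?_
    refine mul_le_mul_of_nonneg_left ?_ (Finset.sum_nonneg fun k hk => (hdpos k hk).le)
    refine Finset.sum_le_sum fun k hk => ?_
    refine div_le_div_of_nonneg_right ?_ (hdpos k hk).le
    rw [QF_norm hg.continuousOn, ← QF_const_mul _ (hDc k _ (hspec i))]
    refine QF_mono (hg.fun_mul hg).continuousOn (continuousOn_const.fun_mul (hDc k _ (hspec i))) ?_ _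
    intro x hx
    rcases le_total x r with hxr | hxr
    · rw [hg0 x hxr]
      have := hD0 k hk x (hspec i hx)
      simp only [mul_zero]
      positivity
    · have h1 := hDμ k hk x (hspec i hx) hxr
      have h2 : g x * g x ≤ 1 := by
        have := hg1 x
        rw [← abs_mul_abs_self (g x)]
        nlinarith [abs_nonneg (g x)]
      refine h2.trans ?_
      rw [inv_mul_eq_div, le_div_iff₀ hμ0]
      linarith
  have hlim : Tendsto (fun i => (∑ k ∈ Finset.range n, d k) *
        ∑ k ∈ Finset.range n, μ⁻¹ * QF (D k) (H i) (u k) / d k) l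
      (𝓝 ((∑ k ∈ Finset.range n, d k) *
        ∑ k ∈ Finset.range n, μ⁻¹ * QF (D k) T (u k) / d k)) := by
    refine Tendsto.const_mul _ (tendsto_finsetSum _ fun k hk => ?_)
    refine Tendsto.div_const (Tendsto.const_mul _ ?_) _
    exact QF_tendsto hfc hsa hspec hTsa hTspec hWOT hfWOT _ _ _
  have hTb : (∑ k ∈ Finset.range n, d k) *
        ∑ k ∈ Finset.range n, μ⁻¹ * QF (D k) T (u k) / d k ≤
      2 * μ⁻¹ * (∑ k ∈ Finset.range n, d k) * ‖v‖ ^ 2 := by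
    have h1 : ∑ k ∈ Finset.range n, μ⁻¹ * QF (D k) T (u k) / d k ≤
        ∑ k ∈ Finset.range n, 2 * μ⁻¹ * QF (hat α h k) T v := by
      refine Finset.sum_le_sum fun k hk => ?_
      rw [div_le_iff₀ (hdpos k hk)]
      have h2 : QF (D k) T (u k) ≤ (2 * d k) * QF (hat α h k) T v := by
        rw [hu, QF_conj (hcont k).continuousOn (hDc k _ hTspec),
          ← QF_const_mul _ (hat_cont α h k).continuousOn]
        refine QF_mono ((hcont k).continuousOn.fun_mul
          ((hDc k _ hTspec).fun_mul (hcont k).continuousOn))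
          (continuousOn_const.fun_mul (hat_cont α h k).continuousOn) (fun x hx => ?_) v
        by_cases hz : hat α h k x = 0
        · simp [hz]
        · have e1 := hD2 k hk x (hat_supp hh k (hαT x hx) hz)
          have e0 := hD0 k hk x (hTspec hx)
          have e2 := hat_nonneg (a := α) hh k x
          have e3 := hat_le_one α h k x
          have e4 : φ x * φ x ≤ 1 := by
            have := hφ1 x
            rw [← abs_mul_abs_self (φ x)]
            nlinarith [abs_nonneg (φ x)]
          have e5 : 0 ≤ φ x * φ x := mul_self_nonneg _
          calc hat α h k x * φ x * (D k x * (hat α h k x * φ x))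
              = D k x * (hat α h k x * (hat α h k x * (φ x * φ x))) := by ring
            _ ≤ (2 * d k) * (hat α h k x * (1 * 1)) := by
                have := hdpos k hk
                gcongr
            _ = 2 * d k * hat α h k x := by ring
      have h3 : 0 ≤ μ⁻¹ := by positivity
      calc μ⁻¹ * QF (D k) T (u k) ≤ μ⁻¹ * ((2 * d k) * QF (hat α h k) T v) :=
            mul_le_mul_of_nonneg_left h2 h3
        _ = _ := by ring
    have h4 : ∑ k ∈ Finset.range n, QF (hat α h k) T v ≤ ‖v‖ ^ 2 := by
      rw [← QF_sum _ (fun k _ => (hat_cont α h k).continuousOn), ← QF_one hTsa]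
      refine QF_mono (continuous_finsetSum _ fun k _ => hat_cont α h k).continuousOn
        continuousOn_const (fun x _ => ?_) v
      rw [hat_sum]
      linarith [tt_nonneg α h n x]
    rw [← Finset.mul_sum] at h1
    have hS : 0 ≤ ∑ k ∈ Finset.range n, d k := Finset.sum_nonneg fun k hk => (hdpos k hk).le
    have h3 : 0 ≤ 2 * μ⁻¹ := by positivity
    calc _ ≤ (∑ k ∈ Finset.range n, d k) * (2 * μ⁻¹ * ‖v‖ ^ 2) := by
          refine mul_le_mul_of_nonneg_left (h1.trans ?_) hS
          exact mul_le_mul_of_nonneg_left h4 h3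
      _ = _ := by ring
  rw [← hsumd]
  filter_upwards [hlim.eventually_lt_const
    (show _ < 2 * μ⁻¹ * (∑ k ∈ Finset.range n, d k) * ‖v‖ ^ 2 + ε by linarith)] with i hi
  exact (hbound i).trans_lt hi

theorem loc_right {ι : Type*} {l : Filter ι} {I : Set ℝ} (hI : I.OrdConnected)
    {f : ℝ → ℝ} (hf : StrictConvexOn ℝ I f) (hfc : ContinuousOn f I)
    {H : ι → 𝓗 →L[ℂ] 𝓗} (hsa : ∀ i, IsSelfAdjoint (H i))
    (hspec : ∀ i, spectrum ℝ (H i) ⊆ I)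
    {T : 𝓗 →L[ℂ] 𝓗} (hTsa : IsSelfAdjoint T) (hTspec : spectrum ℝ T ⊆ I)
    (hWOT : ∀ v w : 𝓗, Tendsto (fun i => ⟪(H i) v, w⟫_ℂ) l (𝓝 ⟪T v, w⟫_ℂ))
    (hfWOT : ∀ v w : 𝓗,
      Tendsto (fun i => ⟪(cfc f (H i)) v, w⟫_ℂ) l (𝓝 ⟪(cfc f T) v, w⟫_ℂ))
    {p r : ℝ} (hpr : p < r)
    {g φ : ℝ → ℝ} (hg : Continuous g) (hφ : Continuous φ)
    (hg1 : ∀ x, |g x| ≤ 1) (hφ1 : ∀ x, |φ x| ≤ 1)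
    (hg0 : ∀ x, x ≤ r → g x = 0) (hφ0 : ∀ x, p ≤ x → φ x = 0) (v : 𝓗) :
    Tendsto (fun i => ‖(cfc g (H i)) ((cfc φ T) v)‖) l (𝓝 0) := by
  by_cases hy : ∃ y ∈ spectrum ℝ T, y < p
  swap
  · push Not at hy
    have : cfc φ T = 0 := by
      rw [cfc_congr (g := fun _ => (0 : ℝ)) (fun x hx => hφ0 x (hy x hx))]
      exact cfc_const_zero ℝ T
    simp [this, tendsto_const_nhds]
  by_cases hx : ∃ i, ∃ x ∈ spectrum ℝ (H i), r < x
  swap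
  · push Not at hx
    have : ∀ i, cfc g (H i) = 0 := by
      intro i
      rw [cfc_congr (g := fun _ => (0 : ℝ)) (fun x hxx => hg0 x (hx i x hxx))]
      exact cfc_const_zero ℝ (H i)
    simp [this, tendsto_const_nhds]
  obtain ⟨y, hyT, hyp⟩ := hy
  obtain ⟨i₀, x₀, hx₀, hrx₀⟩ := hx
  have hp : p ∈ I := hI.out (hTspec hyT) (hspec i₀ hx₀) ⟨hyp.le, by linarith⟩
  have hr : r ∈ I := hI.out (hTspec hyT) (hspec i₀ hx₀) ⟨by linarith, hrx₀.le⟩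
  have hcomp : IsCompact (spectrum ℝ T) := ContinuousFunctionalCalculus.isCompact_spectrum T
  obtain ⟨α, hαT, hαmin⟩ := hcomp.exists_isLeast ⟨y, hyT⟩
  have hαp : α < p := (hαmin hyT).trans_lt hyp
  have hα : α ∈ I := hTspec hαT
  -- continuity along `h = (p - α) / n`
  have hh0 : Tendsto (fun n : ℕ => (p - α) / (n : ℝ)) atTop (𝓝 0) :=
    tendsto_const_div_atTop_nhds_zero_nat _
  have hpos : ∀ᶠ n : ℕ in atTop, 0 < (p - α) / (n : ℝ) := by
    filter_upwards [eventually_gt_atTop 0] with n hn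
    have : (0 : ℝ) < n := by exact_mod_cast hn
    exact div_pos (by linarith) this
  have hsmall : ∀ᶠ n : ℕ in atTop, (p - α) / (n : ℝ) < (r - p) / 2 :=
    hh0.eventually_lt_const (by linarith)
  have hcontAt : ∀ z ∈ I, α ≤ z → z ≤ p →
      Tendsto (fun n : ℕ => f (z + (p - α) / (n : ℝ))) atTop (𝓝 (f z)) := by
    intro z hz h1 h2
    refine (hfc z hz).tendsto.comp (tendsto_nhdsWithin_iff.mpr ⟨?_, ?_⟩)
    · simpa using hh0.const_add z
    · filter_upwards [hpos, hsmall] with n q1 q2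
      exact hI.out hz hr ⟨by linarith, by linarith⟩
  have hB : Tendsto (fun n : ℕ => 2 * (f r + f p - 2 * f ((p + r) / 2))⁻¹ *
      ((f (p + (p - α) / (n : ℝ)) - f p) - (f (α + (p - α) / (n : ℝ)) - f α)) * ‖v‖ ^ 2)
      atTop (𝓝 0) := by
    have := ((((hcontAt p hp hαp.le le_rfl).sub_const (f p)).sub
      ((hcontAt α hα le_rfl hαp.le).sub_const (f α))).const_mul
        (2 * (f r + f p - 2 * f ((p + r) / 2))⁻¹)).mul_const (‖v‖ ^ 2)
    simpa using this
  rw [Metric.tendsto_nhds]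
  intro ε hε
  have hε2 : 0 < ε ^ 2 / 2 := by positivity
  obtain ⟨n, hn0, hnpos, hnsm, hnB⟩ := ((eventually_gt_atTop 0).and (hpos.and (hsmall.and
    (hB.eventually_lt_const hε2)))).exists
  have hn' : (n : ℝ) ≠ 0 := by exact_mod_cast hn0.ne'
  filter_upwards [loc_core hI hf hfc hsa hspec hTsa hTspec hWOT hfWOT hpr hp hr hα hnpos
    hn0.ne' (by field_simp; ring) (by linarith) (fun y hy => hαmin hy) hg hφ hg1 hφ1 hg0 hφ0 v hε2]
    with i hi
  rw [dist_zero_right, norm_norm]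
  refine lt_of_pow_lt_pow_left₀ 2 hε.le ?_
  linarith

theorem loc_left {ι : Type*} {l : Filter ι} {I : Set ℝ} (hI : I.OrdConnected)
    {f : ℝ → ℝ} (hf : StrictConvexOn ℝ I f) (hfc : ContinuousOn f I)
    {H : ι → 𝓗 →L[ℂ] 𝓗} (hsa : ∀ i, IsSelfAdjoint (H i))
    (hspec : ∀ i, spectrum ℝ (H i) ⊆ I)
    {T : 𝓗 →L[ℂ] 𝓗} (hTsa : IsSelfAdjoint T) (hTspec : spectrum ℝ T ⊆ I)
    (hWOT : ∀ v w : 𝓗, Tendsto (fun i => ⟪(H i) v, w⟫_ℂ) l (𝓝 ⟪T v, w⟫_ℂ))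
    (hfWOT : ∀ v w : 𝓗,
      Tendsto (fun i => ⟪(cfc f (H i)) v, w⟫_ℂ) l (𝓝 ⟪(cfc f T) v, w⟫_ℂ))
    {p r : ℝ} (hpr : r < p)
    {g φ : ℝ → ℝ} (hg : Continuous g) (hφ : Continuous φ)
    (hg1 : ∀ x, |g x| ≤ 1) (hφ1 : ∀ x, |φ x| ≤ 1)
    (hg0 : ∀ x, r ≤ x → g x = 0) (hφ0 : ∀ x, x ≤ p → φ x = 0) (v : 𝓗) :
    Tendsto (fun i => ‖(cfc g (H i)) ((cfc φ T) v)‖) l (𝓝 0) := by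
  have hcn : ∀ (A : 𝓗 →L[ℂ] 𝓗) (k : ℝ → ℝ), ContinuousOn k (spectrum ℝ A) → IsSelfAdjoint A →
      cfc (fun x => k (-x)) (-A) = cfc k A := by
    intro A k hk hA
    have h1 : ContinuousOn (fun x => k (-x)) ((fun x : ℝ => -x) '' spectrum ℝ A) := by
      refine hk.comp continuous_neg.continuousOn ?_
      rintro _ ⟨x, hx, rfl⟩
      simpa using hx
    have := cfc_comp_neg (R := ℝ) (fun x => k (-x)) A h1 hA
    rw [← this]
    simp
  have hsp : ∀ A : 𝓗 →L[ℂ] 𝓗, spectrum ℝ A ⊆ I → spectrum ℝ (-A) ⊆ -I := by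
    intro A hA
    rw [← spectrum.neg_eq]
    exact Set.neg_subset_neg.mpr hA
  have hmaps : Set.MapsTo (fun x : ℝ => -x) (-I) I := fun x hx => hx
  have := loc_right (l := l) (I := -I) (f := fun x => f (-x)) (H := fun i => -(H i)) (T := -T)
    (p := -p) (r := -r) (g := fun x => g (-x)) (φ := fun x => φ (-x))
    ⟨fun x hx y hy z hz => hI.out hy hx ⟨neg_le_neg hz.2, neg_le_neg hz.1⟩⟩
    (by
      refine ⟨fun x hx y hy a b ha hb hab => ?_, fun x hx y hy hxy a b ha hb hab => ?_⟩
      · have := hf.1 hx hy ha hb hab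
        simp only [smul_eq_mul] at this
        simp only [smul_eq_mul, Set.mem_neg]
        convert this using 1
        ring
      · have := hf.2 hx hy (by simpa using hxy) ha hb hab
        simp only [smul_eq_mul] at this
        simp only [smul_eq_mul]
        convert this using 2
        ring)
    (hfc.comp continuous_neg.continuousOn hmaps)
    (fun i => (hsa i).neg) (fun i => hsp _ (hspec i)) hTsa.neg (hsp _ hTspec)
    (fun v w => by simpa using (hWOT v w).neg)
    (fun v w => by
      rw [hcn T f (hfc.mono hTspec) hTsa]
      simp_rw [fun i => hcn (H i) f (hfc.mono (hspec i)) (hsa i)]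
      exact hfWOT v w)
    (by linarith) (hg.comp continuous_neg) (hφ.comp continuous_neg)
    (fun x => hg1 _) (fun x => hφ1 _) (fun x hx => hg0 _ (by linarith))
    (fun x hx => hφ0 _ (by linarith)) v
  rw [hcn T φ hφ.continuousOn hTsa] at this
  simp_rw [fun i => hcn (H i) g hg.continuousOn (hsa i)] at this
  exact this

end loc

theorem spec_bound {𝓗 : Type*} [NormedAddCommGroup 𝓗] [InnerProductSpace ℂ 𝓗]
    [CompleteSpace 𝓗] {A : 𝓗 →L[ℂ] 𝓗} {C : ℝ} (hC : ‖A‖ ≤ C) {x : ℝ}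
    (hx : x ∈ spectrum ℝ A) : |x| ≤ C := by
  have h1 : ‖x‖ ≤ ‖A‖ * ‖(1 : 𝓗 →L[ℂ] 𝓗)‖ := spectrum.norm_le_norm_mul_of_mem hx
  have h2 : ‖(1 : 𝓗 →L[ℂ] 𝓗)‖ ≤ 1 := ContinuousLinearMap.norm_id_le
  rw [Real.norm_eq_abs] at h1
  nlinarith [norm_nonneg A]

/-- **Theorem 2.1 (second part).** If moreover the net `(Hᵢ)` is bounded in operator
norm, then `(Hᵢ)` converges strongly to `H`. -/
theorem stmt_4 {𝓗 : Type*} [NormedAddCommGroup 𝓗] [InnerProductSpace ℂ 𝓗]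
    [CompleteSpace 𝓗]
    {ι : Type*} (l : Filter ι) [l.NeBot]
    (I : Set ℝ) (hI : I.OrdConnected)
    (f : ℝ → ℝ) (hf : StrictConvexOn ℝ I f) (hfc : ContinuousOn f I)
    (H : ι → 𝓗 →L[ℂ] 𝓗) (hsa : ∀ i, IsSelfAdjoint (H i))
    (hspec : ∀ i, spectrum ℝ (H i) ⊆ I)
    (hbdd : ∃ C : ℝ, ∀ i, ‖H i‖ ≤ C)
    (T : 𝓗 →L[ℂ] 𝓗) (hTsa : IsSelfAdjoint T) (hTspec : spectrum ℝ T ⊆ I)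
    (hWOT : ∀ v w : 𝓗, Tendsto (fun i => ⟪(H i) v, w⟫_ℂ) l (𝓝 ⟪T v, w⟫_ℂ))
    (hfWOT : ∀ v w : 𝓗,
      Tendsto (fun i => ⟪(cfc f (H i)) v, w⟫_ℂ) l (𝓝 ⟪(cfc f T) v, w⟫_ℂ)) :
    ∀ v : 𝓗, Tendsto (fun i => (H i) v) l (𝓝 (T v)) := by
  intro v
  obtain ⟨C₀, hC₀⟩ := hbdd
  set C := max (max C₀ ‖T‖) 1 with hC
  have hC1 : 1 ≤ C := le_max_right _ _
  have hCH : ∀ i, ∀ x ∈ spectrum ℝ (H i), |x| ≤ C := fun i x hx =>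
    spec_bound ((hC₀ i).trans ((le_max_left _ _).trans (le_max_left _ _))) hx
  have hCT : ∀ x ∈ spectrum ℝ T, |x| ≤ C := fun x hx =>
    spec_bound ((le_max_right _ _).trans (le_max_left _ _)) hx
  rw [Metric.tendsto_nhds]
  intro ε hε
  -- parameters
  set τ := ε / (8 * C) with hτ
  have hτ0 : 0 < τ := by positivity
  obtain ⟨N, hN⟩ := exists_nat_gt (64 * C * ‖v‖ ^ 2 / (τ * ε))
  have hN0 : (0 : ℝ) < N := lt_of_le_of_lt (by positivity) hN
  set δ := 2 * C / N with hδ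
  have hδ0 : 0 < δ := by positivity
  have hNδ : N * δ = 2 * C := by rw [hδ]; field_simp
  have hδs : 4 * δ * ‖v‖ ^ 2 / τ < ε / 4 := by
    rw [div_lt_iff₀ (by positivity)] at hN
    rw [div_lt_iff₀ hτ0, hδ]
    have : 4 * (2 * C / N) * ‖v‖ ^ 2 = (8 * C * ‖v‖ ^ 2) / N := by ring
    rw [this, div_lt_iff₀ hN0]
    nlinarith
  set b : ℕ → ℝ := fun j => -C + j * δ with hb
  set s : ℕ → ℝ → ℝ := fun j => st (b j) δ with hs
  have hsc : ∀ j, Continuous (s j) := fun j => st_cont _ _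
  -- decomposition
  have hdec : ∀ A : 𝓗 →L[ℂ] 𝓗, IsSelfAdjoint A → (∀ x ∈ spectrum ℝ A, |x| ≤ C) →
      A v = (-C) • v + δ • ∑ j ∈ Finset.range N, (cfc (s j) A) v := by
    intro A hA hAC
    have e1 : cfc (fun x : ℝ => x) A
        = cfc (fun x : ℝ => (-C) + δ * ∑ j ∈ Finset.range N, s j x) A := by
      refine cfc_congr fun x hx => ?_
      have := abs_le.mp (hAC x hx)
      have := st_sum (a := -C) hδ0 N (x := x) this.1 (by linarith)
      simp only [hs, hb]
      linarith
    have cs : Continuous fun x => ∑ j ∈ Finset.range N, s j x :=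
      continuous_finsetSum _ fun j _ => hsc j
    rw [← cfc_sum_apply _ (fun j _ => (hsc j).continuousOn), ← cfc_const_mul_apply δ cs.continuousOn,
      ← cfc_const_apply (-C) hA, ← cfc_add_apply continuousOn_const
        (continuous_const.fun_mul cs).continuousOn, ← e1, cfc_id_apply' hA]
  -- window vectors
  set ω : ℕ → ℝ → ℝ := fun j x => st (b j - 2 * δ) δ x - st (b j + 2 * δ) δ x with hω
  have hωc : ∀ j, Continuous (ω j) := fun j => (st_cont _ _).sub (st_cont _ _)
  set m : ℕ → 𝓗 := fun j => (cfc (ω j) T) v with hm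
  have hω0 : ∀ j x, 0 ≤ ω j x := fun j x => sub_nonneg.mpr (st_anti hδ0 (by linarith))
  have hω1 : ∀ j x, ω j x ≤ 1 := fun j x => by
    simp only [hω]
    linarith [st_le_one (b j - 2 * δ) δ x, st_nonneg (b j + 2 * δ) δ x]
  have hωsum : ∀ x, ∑ j ∈ Finset.range N, ω j x ≤ 4 := by
    intro x
    set F : ℕ → ℝ := fun j => st (-C - 2 * δ + j * δ) δ x with hF
    have e : ∀ j ∈ Finset.range N, ω j x = (F j + F (j + 1) + F (j + 2) + F (j + 3)) -
        (F (j + 1) + F (j + 1 + 1) + F (j + 1 + 2) + F (j + 1 + 3)) := by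
      intro j _
      simp only [hω, hF, hb]
      push_cast
      rw [show -C + j * δ - 2 * δ = -C - 2 * δ + j * δ by ring,
        show -C + j * δ + 2 * δ = -C - 2 * δ + (j + 1 + 3) * δ by ring]
      ring_nf
    rw [Finset.sum_congr rfl e,
      Finset.sum_range_sub' (fun j : ℕ => F j + F (j + 1) + F (j + 2) + F (j + 3)) N]
    have f0 : ∀ j, 0 ≤ F j := fun j => st_nonneg _ _ _
    have f1 : ∀ j, F j ≤ 1 := fun j => st_le_one _ _ _
    linarith [f0 N, f0 (N + 1), f0 (N + 2), f0 (N + 3), f1 0, f1 (0 + 1), f1 (0 + 2), f1 (0 + 3)]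
  have hmsum : ∑ j ∈ Finset.range N, ‖m j‖ ^ 2 ≤ 4 * ‖v‖ ^ 2 := by
    have e : ∀ j ∈ Finset.range N, ‖m j‖ ^ 2 ≤ QF (ω j) T v := by
      intro j _
      simp only [hm]
      rw [QF_norm (hωc j).continuousOn]
      refine QF_mono ((hωc j).fun_mul (hωc j)).continuousOn (hωc j).continuousOn (fun x _ => ?_) v
      nlinarith [hω0 j x, hω1 j x]
    refine (Finset.sum_le_sum e).trans ?_
    rw [← QF_sum _ (fun j _ => (hωc j).continuousOn), ← QF_one hTsa,
      ← QF_const_mul 4 continuousOn_const]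
    refine QF_mono (continuous_finsetSum _ fun j _ => hωc j).continuousOn
      continuousOn_const (fun x _ => ?_) v
    linarith [hωsum x]
  have habs : ∀ a x, |st a δ x| ≤ 1 := fun a x => by
    rw [abs_of_nonneg (st_nonneg _ _ _)]; exact st_le_one _ _ _
  have habs' : ∀ a x, |1 - st a δ x| ≤ 1 := fun a x => by
    rw [abs_of_nonneg (by linarith [st_le_one a δ x])]; linarith [st_nonneg a δ x]
  -- each ramp
  have hstep : ∀ j, ∀ i, ‖(cfc (s j) (H i)) v - (cfc (s j) T) v‖ ≤
      ‖(cfc (s j) (H i)) ((cfc (fun x => 1 - st (b j - 2 * δ) δ x) T) v)‖ +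
      ‖(cfc (fun x => 1 - s j x) (H i)) ((cfc (st (b j + 2 * δ) δ) T) v)‖ + 2 * ‖m j‖ := by
    intro j i
    have c1 : Continuous (st (b j - 2 * δ) δ) := st_cont _ _
    have c2 : Continuous (st (b j + 2 * δ) δ) := st_cont _ _
    set A := cfc (s j) (H i) with hA
    set va := (cfc (fun x => 1 - st (b j - 2 * δ) δ x) T) v with hva
    set vb := (cfc (st (b j + 2 * δ) δ) T) v with hvb
    have ev : v = va + vb + m j := by
      simp only [hva, hvb, hm, hω]
      rw [cfc_sub_apply continuousOn_const c1.continuousOn,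
        cfc_sub_apply c1.continuousOn c2.continuousOn, cfc_const_apply 1 hTsa, one_smul]
      abel
    have eb : (cfc (fun x => 1 - s j x) (H i)) vb = vb - A vb := by
      rw [cfc_sub_apply continuousOn_const (hsc j).continuousOn, cfc_const_apply 1 (hsa i),
        one_smul]
    have ta : (cfc (s j) T) va = 0 := by
      rw [hva, ← cfc_mul_apply (hsc j).continuousOn (continuous_const.fun_sub c1).continuousOn]
      have : (fun x => s j x * (1 - st (b j - 2 * δ) δ x)) = fun _ => 0 := by
        ext x
        rcases le_total x (b j) with h | h
        · simp only [hs]; rw [st_zero hδ0 h]; simp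
        · rw [st_one (a := b j - 2 * δ) hδ0 (by linarith)]; simp
      rw [this, cfc_const_zero]; rfl
    have tb : (cfc (s j) T) vb = vb := by
      rw [hvb, ← cfc_mul_apply (hsc j).continuousOn c2.continuousOn]
      congr 2
      ext x
      rcases le_total x (b j + 2 * δ) with h | h
      · rw [st_zero hδ0 h]; simp
      · simp only [hs]; rw [st_one (a := b j) hδ0 (by linarith)]; simp
    have key : A v - (cfc (s j) T) v
        = A va - (vb - A vb) + (A (m j) - (cfc (s j) T) (m j)) := by
      conv_lhs => rw [ev]
      simp only [map_add, ta, tb]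
      abel
    rw [key, eb]
    have n1 : ‖A (m j)‖ ≤ ‖m j‖ := cfc_norm_le (hsa i) (hsc j).continuousOn (fun x _ => habs _ x) _
    have n2 : ‖(cfc (s j) T) (m j)‖ ≤ ‖m j‖ :=
      cfc_norm_le hTsa (hsc j).continuousOn (fun x _ => habs _ x) _
    calc _ ≤ ‖A va - (vb - A vb)‖ + ‖A (m j) - (cfc (s j) T) (m j)‖ := norm_add_le _ _
      _ ≤ (‖A va‖ + ‖vb - A vb‖) + (‖A (m j)‖ + ‖(cfc (s j) T) (m j)‖) :=
        add_le_add (norm_sub_le _ _) (norm_sub_le _ _)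
      _ ≤ _ := by linarith
  have hRj : ∀ j, Tendsto (fun i =>
      ‖(cfc (s j) (H i)) ((cfc (fun x => 1 - st (b j - 2 * δ) δ x) T) v)‖ +
      ‖(cfc (fun x => 1 - s j x) (H i)) ((cfc (st (b j + 2 * δ) δ) T) v)‖) l (𝓝 0) := by
    intro j
    have t1 := loc_right hI hf hfc hsa hspec hTsa hTspec hWOT hfWOT
      (p := b j - δ) (r := b j) (by linarith) (hsc j)
      (continuous_const.fun_sub (st_cont (b j - 2 * δ) δ)) (fun x => habs _ x) (fun x => habs' _ x)
      (fun x hx => st_zero hδ0 hx)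
      (fun x hx => by rw [st_one hδ0 (by linarith)]; simp) v
    have t2 := loc_left hI hf hfc hsa hspec hTsa hTspec hWOT hfWOT
      (p := b j + 2 * δ) (r := b j + δ) (by linarith)
      (continuous_const.fun_sub (hsc j))
      (st_cont (b j + 2 * δ) δ) (fun x => habs' _ x) (fun x => habs _ x)
      (fun x hx => by simp only [hs]; rw [st_one hδ0 hx]; simp)
      (fun x hx => st_zero hδ0 hx) v
    simpa using t1.add t2
  have hR := (tendsto_finsetSum (Finset.range N) fun j _ => hRj j).const_mul δ
  simp only [Finset.sum_const_zero, mul_zero] at hR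
  filter_upwards [hR.eventually_lt_const (show (0 : ℝ) < ε / 4 by positivity)] with i hi
  rw [dist_eq_norm, hdec (H i) (hsa i) (hCH i), hdec T hTsa hCT, add_sub_add_left_eq_sub,
    ← smul_sub, ← Finset.sum_sub_distrib, norm_smul, Real.norm_of_nonneg hδ0.le]
  have hmm : δ * ∑ j ∈ Finset.range N, 2 * ‖m j‖ ≤ ε / 4 + 4 * δ * ‖v‖ ^ 2 / τ := by
    have e : ∀ j ∈ Finset.range N, 2 * ‖m j‖ ≤ τ + ‖m j‖ ^ 2 / τ := by
      intro j _
      have : τ + ‖m j‖ ^ 2 / τ - 2 * ‖m j‖ = (τ - ‖m j‖) ^ 2 / τ := by field_simp; ring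
      have h2 : 0 ≤ (τ - ‖m j‖) ^ 2 / τ := by positivity
      linarith
    have e2 : ∑ j ∈ Finset.range N, 2 * ‖m j‖ ≤ N * τ + 4 * ‖v‖ ^ 2 / τ := by
      refine (Finset.sum_le_sum e).trans ?_
      rw [Finset.sum_add_distrib, Finset.sum_const, Finset.card_range, nsmul_eq_mul]
      refine add_le_add le_rfl ?_
      rw [← Finset.sum_div]
      exact div_le_div_of_nonneg_right hmsum hτ0.le
    have e3 : N * δ * τ = ε / 4 := by rw [hNδ, hτ]; field_simp; norm_num
    calc _ ≤ δ * (N * τ + 4 * ‖v‖ ^ 2 / τ) := mul_le_mul_of_nonneg_left e2 hδ0.le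
      _ = N * δ * τ + 4 * δ * ‖v‖ ^ 2 / τ := by ring
      _ = _ := by rw [e3]
  have hfin : ‖∑ j ∈ Finset.range N, ((cfc (s j) (H i)) v - (cfc (s j) T) v)‖ ≤
      ∑ j ∈ Finset.range N,
        (‖(cfc (s j) (H i)) ((cfc (fun x => 1 - st (b j - 2 * δ) δ x) T) v)‖ +
        ‖(cfc (fun x => 1 - s j x) (H i)) ((cfc (st (b j + 2 * δ) δ) T) v)‖) +
      ∑ j ∈ Finset.range N, 2 * ‖m j‖ := by
    rw [← Finset.sum_add_distrib]
    exact (norm_sum_le _ _).trans (Finset.sum_le_sum fun j _ => hstep j i)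
  have := mul_le_mul_of_nonneg_left hfin hδ0.le
  rw [mul_add] at this
  linarith
end

section
/- Let f be a strictly convex continuous real-valued function on an interval I ⊆ ℝ, let a, x, y ∈ I with a < x < y, let ℓ be the affine function with ℓ(a) = f(a) and ℓ(x) = f(x), and set g = f − ℓ. Let γ = −(the minimum of g on [a, x]) and β = g(y). Then γ > 0, the minimum of g on [a,x] is attained at some c with a < c < x, β > 0, and γ/β ≤ (x − a)/(y − x). -/
set_option synthInstance.maxHeartbeats 400000
set_option maxHeartbeats 800000

/-- **Lemma 2.2 (key computation).** Let `f` be strictly convex and continuous on an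
interval `I`, let `a < x < y` in `I`, let `ℓ` be the affine function with `ℓ(a) = f(a)`
and `ℓ(x) = f(x)`, and set `g = f − ℓ`.  Then the minimum `−γ` of `g` on `[a, x]` is
attained at some `c ∈ (a, x)`, `γ > 0`, `β = g(y) > 0`, and `γ/β ≤ (x − a)/(y − x)`. -/
theorem stmt_6 (I : Set ℝ) (hI : I.OrdConnected)
    (f : ℝ → ℝ) (hf : StrictConvexOn ℝ I f) (hfc : ContinuousOn f I)
    (a x y : ℝ) (ha : a ∈ I) (hx : x ∈ I) (hy : y ∈ I)
    (hax : a < x) (hxy : x < y)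
    (ℓ : ℝ → ℝ) (hℓ : ∃ α δ : ℝ, ∀ z, ℓ z = α * z + δ)
    (hℓa : ℓ a = f a) (hℓx : ℓ x = f x) :
    ∃ c ∈ Set.Ioo a x, IsMinOn (fun z => f z - ℓ z) (Set.Icc a x) c ∧
      0 < -(f c - ℓ c) ∧ 0 < f y - ℓ y ∧
      (-(f c - ℓ c)) / (f y - ℓ y) ≤ (x - a) / (y - x) := by
  obtain ⟨α, δ, hl⟩ := hℓ
  have key : ∀ p q r : ℝ, p ∈ I → r ∈ I → p < q → q < r →
      (r - p) * (f q - ℓ q) < (r - q) * (f p - ℓ p) + (q - p) * (f r - ℓ r) := by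
    intro p q r hp hr hpq hqr
    have h := hf.slope_strict_mono_adjacent hp hr hpq hqr
    rw [div_lt_div_iff₀ (by linarith) (by linarith)] at h
    rw [hl p, hl q, hl r]
    nlinarith [h]
  have hneg : ∀ z, a < z → z < x → f z - ℓ z < 0 := by
    intro z h1 h2
    have h := key a z x ha hx h1 h2
    rw [hℓa, hℓx] at h
    by_contra hc
    have := mul_nonneg (sub_nonneg.2 hax.le) (not_lt.1 hc)
    linarith
  have hcont : ContinuousOn (fun z => f z - ℓ z) (Set.Icc a x) := by
    refine (hfc.mono (hI.out ha hx)).sub ?_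
    have : ℓ = fun z => α * z + δ := funext hl
    rw [this]
    fun_prop
  obtain ⟨c, hc, hmin⟩ := isCompact_Icc.exists_isMinOn (Set.nonempty_Icc.2 hax.le) hcont
  have hm := hneg ((a + x) / 2) (by linarith) (by linarith)
  have hcm : f c - ℓ c ≤ f ((a + x) / 2) - ℓ ((a + x) / 2) :=
    hmin (show (a + x) / 2 ∈ Set.Icc a x from ⟨by linarith, by linarith⟩)
  have hac : a < c := by
    refine lt_of_le_of_ne hc.1 ?_
    rintro rfl
    linarith
  have hcx : c < x := by
    refine lt_of_le_of_ne hc.2 ?_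
    rintro rfl
    linarith
  have hβ : 0 < f y - ℓ y := by
    have h := key a x y ha hy hax hxy
    rw [hℓa, hℓx] at h
    simp only [sub_self, mul_zero, zero_add] at h
    exact (mul_pos_iff_of_pos_left (sub_pos.2 hax)).1 h
  refine ⟨c, ⟨hac, hcx⟩, hmin, by linarith, hβ, ?_⟩
  rw [div_le_div_iff₀ hβ (sub_pos.2 hxy)]
  have h := key c x y (hI.out ha hx hc) hy hcx hxy
  rw [hℓx] at h
  simp only [sub_self, mul_zero] at h
  nlinarith [mul_pos (sub_pos.2 hac) hβ]
end

section
/- Let f be a strictly convex continuous function on a compact interval [a,b], let 𝓗 and 𝓚 be complex Hilbert spaces, let φ : B(𝓗) → B(𝓚) be a unital completely positive linear map, and let H be a self-adjoint bounded operator on 𝓗 with σ(H) ⊆ [a,b]. If φ(f(H)) = f(φ(H)), then the restriction of φ to the algebra of polynomials in H is multiplicative; that is, φ(p(H) q(H)) = φ(p(H)) φ(q(H)) for all polynomials p and q. -/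
set_option synthInstance.maxHeartbeats 400000
set_option maxHeartbeats 800000

open Polynomial Matrix

lemma aux_gram {𝓗 𝓚 : Type*} [NormedAddCommGroup 𝓗] [InnerProductSpace ℂ 𝓗]
    [CompleteSpace 𝓗] [NormedAddCommGroup 𝓚] [InnerProductSpace ℂ 𝓚] [CompleteSpace 𝓚]
    (φ : (𝓗 →L[ℂ] 𝓗) →ₗ[ℂ] (𝓚 →L[ℂ] 𝓚))
    (hφcp : ∀ (n : ℕ) (A : Matrix (Fin n) (Fin n) (𝓗 →L[ℂ] 𝓗)),
      (∃ B, A = Bᴴ * B) → ∃ C, A.map (fun x => φ x) = Cᴴ * C)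
    (T : Fin 3 → (𝓗 →L[ℂ] 𝓗)) :
    ∃ C : Matrix (Fin 3) (Fin 3) (𝓚 →L[ℂ] 𝓚),
      ∀ i j, φ (star (T i) * T j) = ∑ k, star (C k i) * C k j := by
  obtain ⟨C, hC⟩ := hφcp 3 (Matrix.of fun i j => star (T i) * T j)
    ⟨Matrix.of fun i j => if i = 0 then T j else 0, by
      ext1 i j
      simp [Matrix.mul_apply, Matrix.conjTranspose_apply]⟩
  refine ⟨C, fun i j => ?_⟩
  have := congrFun (congrFun hC i) j
  simpa [Matrix.mul_apply, Matrix.conjTranspose_apply] using this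

lemma aux_pos {𝓗 𝓚 : Type*} [NormedAddCommGroup 𝓗] [InnerProductSpace ℂ 𝓗]
    [CompleteSpace 𝓗] [NormedAddCommGroup 𝓚] [InnerProductSpace ℂ 𝓚] [CompleteSpace 𝓚]
    (φ : (𝓗 →L[ℂ] 𝓗) →ₗ[ℂ] (𝓚 →L[ℂ] 𝓚))
    (hφcp : ∀ (n : ℕ) (A : Matrix (Fin n) (Fin n) (𝓗 →L[ℂ] 𝓗)),
      (∃ B, A = Bᴴ * B) → ∃ C, A.map (fun x => φ x) = Cᴴ * C)
    {S T : 𝓗 →L[ℂ] 𝓗} (hST : S ≤ T) : φ S ≤ φ T := by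
  obtain ⟨B, hB⟩ := CStarAlgebra.nonneg_iff_eq_star_mul_self.mp (sub_nonneg.mpr hST)
  obtain ⟨C, hC⟩ := aux_gram φ hφcp (fun _ => B)
  rw [← sub_nonneg, ← map_sub, hB, hC 0 0]
  exact Finset.sum_nonneg fun k _ => star_mul_self_nonneg _

/-- self-adjointness, Kadison inequality and multiplicative domain -/
lemma aux_dom {𝓗 𝓚 : Type*} [NormedAddCommGroup 𝓗] [InnerProductSpace ℂ 𝓗]
    [CompleteSpace 𝓗] [NormedAddCommGroup 𝓚] [InnerProductSpace ℂ 𝓚] [CompleteSpace 𝓚]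
    (φ : (𝓗 →L[ℂ] 𝓗) →ₗ[ℂ] (𝓚 →L[ℂ] 𝓚)) (hφ1 : φ 1 = 1)
    (hφcp : ∀ (n : ℕ) (A : Matrix (Fin n) (Fin n) (𝓗 →L[ℂ] 𝓗)),
      (∃ B, A = Bᴴ * B) → ∃ C, A.map (fun x => φ x) = Cᴴ * C)
    (H : 𝓗 →L[ℂ] 𝓗) (hH : IsSelfAdjoint H) (Y : 𝓗 →L[ℂ] 𝓗) :
    IsSelfAdjoint (φ H) ∧ 0 ≤ φ (H * H) - φ H * φ H ∧
      (φ (H * H) - φ H * φ H = 0 → φ (H * Y) = φ H * φ Y) := by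
  obtain ⟨C, hC⟩ := aux_gram φ hφcp ![1, H, Y]
  have h00 := hC 0 0
  have h01 := hC 0 1
  have h10 := hC 1 0
  have h11 := hC 1 1
  have h02 := hC 0 2
  have h12 := hC 1 2
  simp only [Matrix.cons_val_zero, Matrix.cons_val_one, Matrix.cons_val, star_one, one_mul, mul_one, hφ1, hH.star_eq]
    at h00 h01 h10 h11 h02 h12
  have hsa : star (φ H) = φ H := by
    conv_lhs => rw [h01]
    rw [h10, star_sum]
    simp
  set K := φ H with hK
  have key : φ (H * H) - K * K = ∑ k, star (C k 1 - C k 0 * K) * (C k 1 - C k 0 * K) := by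
    have : ∀ k, star (C k 1 - C k 0 * K) * (C k 1 - C k 0 * K)
        = star (C k 1) * C k 1 - (star (C k 1) * C k 0) * K - K * (star (C k 0) * C k 1)
          + K * (star (C k 0) * C k 0) * K := by
      intro k
      rw [star_sub, star_mul, hsa]
      noncomm_ring
    simp only [this, Finset.sum_add_distrib, Finset.sum_sub_distrib, ← Finset.sum_mul,
      ← Finset.mul_sum, ← h00, ← h01, ← h10, ← h11]
    noncomm_ring
  refine ⟨hsa, ?_, ?_⟩
  · rw [key]
    exact Finset.sum_nonneg fun k _ => star_mul_self_nonneg _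
  · intro h0
    rw [key, Finset.sum_eq_zero_iff_of_nonneg (fun k _ => star_mul_self_nonneg _)] at h0
    have hk : ∀ k, C k 1 = C k 0 * K := fun k => by
      have := (CStarRing.star_mul_self_eq_zero_iff _).mp (h0 k (Finset.mem_univ _))
      exact sub_eq_zero.mp this
    rw [h12, h02, Finset.mul_sum]
    refine Finset.sum_congr rfl fun k _ => ?_
    rw [hk, star_mul, hsa, mul_assoc]

lemma aux_poly {𝓗 𝓚 : Type*} [NormedAddCommGroup 𝓗] [InnerProductSpace ℂ 𝓗]
    [CompleteSpace 𝓗] [NormedAddCommGroup 𝓚] [InnerProductSpace ℂ 𝓚] [CompleteSpace 𝓚]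
    (φ : (𝓗 →L[ℂ] 𝓗) →ₗ[ℂ] (𝓚 →L[ℂ] 𝓚)) (hφ1 : φ 1 = 1) (H : 𝓗 →L[ℂ] 𝓗)
    (h : ∀ Y, φ (H * Y) = φ H * φ Y) (p : Polynomial ℂ) (Y : 𝓗 →L[ℂ] 𝓗) :
    φ (aeval H p * Y) = φ (aeval H p) * φ Y := by
  have hn : ∀ (n : ℕ) Y, φ (H ^ n * Y) = φ H ^ n * φ Y := by
    intro n
    induction n with
    | zero => simp
    | succ n ih => intro Y; rw [pow_succ', mul_assoc, h, ih, pow_succ', mul_assoc]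
  have hn1 : ∀ (n : ℕ), φ (H ^ n) = φ H ^ n := fun n => by
    simpa [hφ1] using hn n 1
  induction p using Polynomial.induction_on' with
  | add p q hp hq => simp [add_mul, hp, hq]
  | monomial n a =>
    simp only [aeval_monomial, Algebra.algebraMap_eq_smul_one, smul_mul_assoc, one_mul, map_smul,
      hn, hn1]

lemma aux_q_mono {𝓚 : Type*} [NormedAddCommGroup 𝓚] [InnerProductSpace ℂ 𝓚] [CompleteSpace 𝓚]
    {A B : 𝓚 →L[ℂ] 𝓚} (h : A ≤ B) (v : 𝓚) : A.reApplyInnerSelf v ≤ B.reApplyInnerSelf v := by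
  have := ((ContinuousLinearMap.le_def _ _).mp h).re_inner_nonneg_left v
  simp only [ContinuousLinearMap.reApplyInnerSelf_apply]
  simpa [inner_sub_left] using this

lemma aux_q_star {𝓚 : Type*} [NormedAddCommGroup 𝓚] [InnerProductSpace ℂ 𝓚] [CompleteSpace 𝓚]
    (S A : 𝓚 →L[ℂ] 𝓚) (v : 𝓚) :
    A.reApplyInnerSelf (S v) = (star S * A * S).reApplyInnerSelf v := by
  simp only [ContinuousLinearMap.reApplyInnerSelf_apply]
  simp [ContinuousLinearMap.star_eq_adjoint, ContinuousLinearMap.adjoint_inner_left]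

lemma aux_q_one {𝓚 : Type*} [NormedAddCommGroup 𝓚] [InnerProductSpace ℂ 𝓚] 
    (v : 𝓚) : (1 : 𝓚 →L[ℂ] 𝓚).reApplyInnerSelf v = ‖v‖ ^ 2 := by
  rw [ContinuousLinearMap.reApplyInnerSelf_apply]
  simp
  norm_cast

/-- triangle/Cauchy-Schwarz -/
lemma aux_cs {𝓚 : Type*} [NormedAddCommGroup 𝓚] [InnerProductSpace ℂ 𝓚] [CompleteSpace 𝓚]
    {A : 𝓚 →L[ℂ] 𝓚} (hA : 0 ≤ A) (M : ℕ) (η : ℕ → 𝓚) (β : ℕ → ℝ) (hβ : ∀ k < M, 0 ≤ β k)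
    (h : ∀ k < M, A.reApplyInnerSelf (η k) ≤ β k * ‖η k‖ ^ 2) :
    A.reApplyInnerSelf (∑ k ∈ Finset.range M, η k) ≤
      (∑ k ∈ Finset.range M, β k) * ∑ k ∈ Finset.range M, ‖η k‖ ^ 2 := by
  obtain ⟨S, rfl⟩ := CStarAlgebra.nonneg_iff_eq_star_mul_self.mp hA
  have hq : ∀ v, (star S * S).reApplyInnerSelf v = ‖S v‖ ^ 2 := fun v => by
    rw [← aux_q_one, aux_q_star]; simp
  simp only [hq] at h ⊢
  rw [map_sum]
  have h1 : ‖∑ k ∈ Finset.range M, S (η k)‖ ≤ ∑ k ∈ Finset.range M, √(β k) * ‖η k‖ := by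
    refine (norm_sum_le _ _).trans (Finset.sum_le_sum fun k hk => ?_)
    have hk := Finset.mem_range.mp hk
    refine abs_le_of_sq_le_sq' ?_ (by positivity) |>.2
    rw [mul_pow, Real.sq_sqrt (hβ k hk)]
    exact h k hk
  calc _ ≤ (∑ k ∈ Finset.range M, √(β k) * ‖η k‖) ^ 2 := by gcongr
    _ ≤ (∑ k ∈ Finset.range M, √(β k) ^ 2) * ∑ k ∈ Finset.range M, ‖η k‖ ^ 2 :=
      Finset.sum_mul_sq_le_sq_mul_sq _ _ _
    _ = _ := by
      congr 1
      exact Finset.sum_congr rfl fun k hk => Real.sq_sqrt (hβ k (Finset.mem_range.mp hk))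

lemma aux_support {a b : ℝ} {f : ℝ → ℝ} (hf : ConvexOn ℝ (Set.Icc a b) f)
    {x : ℝ} (hx : x ∈ Set.Ioo a b) :
    ∃ s : ℝ, ∀ t ∈ Set.Icc a b, f x + s * (t - x) ≤ f t := by
  have hxi : x ∈ interior (Set.Icc a b) := by rwa [interior_Icc]
  have hxm : x ∈ Set.Icc a b := Set.Ioo_subset_Icc_self hx
  refine ⟨derivWithin f (Set.Ioi x) x, fun t ht => ?_⟩
  rcases lt_trichotomy t x with h | h | h
  · have h1 := hf.slope_le_leftDeriv_of_mem_interior ht hxi h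
    have h2 := hf.leftDeriv_le_rightDeriv_of_mem_interior hxi
    have h3 := h1.trans h2
    rw [slope_def_field, div_le_iff₀ (by linarith)] at h3
    linarith
  · subst h; simp
  · have h1 := hf.rightDeriv_le_slope_of_mem_interior hxi ht h
    rw [slope_def_field, le_div_iff₀ (by linarith)] at h1
    linarith

lemma aux_modulus {a b : ℝ} {f : ℝ → ℝ} (hf : StrictConvexOn ℝ (Set.Icc a b) f)
    (hfc : ContinuousOn f (Set.Icc a b)) {r : ℝ} (hr : 0 < r) :
    ∃ m > 0, ∀ x ∈ Set.Icc a b, ∀ s, (∀ t ∈ Set.Icc a b, f x + s * (t - x) ≤ f t) →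
      ∀ t ∈ Set.Icc a b, r ≤ |t - x| → m ≤ f t - f x - s * (t - x) := by
  let Z : Set (ℝ × ℝ) := (Set.Icc a b ×ˢ Set.Icc a b) ∩ {p | r ≤ |p.2 - p.1|}
  have hZ : IsCompact Z := (isCompact_Icc.prod isCompact_Icc).inter_right
    (isClosed_le continuous_const (by fun_prop))
  have hmid : ∀ p ∈ Z, (p.1 + p.2) / 2 ∈ Set.Icc a b := by
    rintro ⟨x, t⟩ ⟨⟨hx, ht⟩, -⟩
    simp only [Set.mem_Icc] at *
    constructor <;> linarith [hx.1, hx.2, ht.1, ht.2]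
  have hc : ContinuousOn (fun p : ℝ × ℝ => f p.2 + f p.1 - 2 * f ((p.1 + p.2) / 2)) Z := by
    refine ((hfc.comp (by fun_prop) fun p hp => hp.1.2).add
      (hfc.comp (by fun_prop) fun p hp => hp.1.1)).sub
      (continuousOn_const.mul (hfc.comp (by fun_prop) hmid))
  have hpos : ∀ p ∈ Z, 0 < f p.2 + f p.1 - 2 * f ((p.1 + p.2) / 2) := by
    rintro ⟨x, t⟩ ⟨⟨hx, ht⟩, h⟩
    have hne : x ≠ t := by
      rintro rfl
      simp at h
      linarith
    have := hf.2 hx ht hne (show (0 : ℝ) < 1 / 2 by norm_num) (show (0 : ℝ) < 1 / 2 by norm_num)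
      (by norm_num)
    simp only [smul_eq_mul] at this
    have e : 1 / 2 * x + 1 / 2 * t = (x + t) / 2 := by ring
    rw [e] at this
    simp only
    linarith
  obtain ⟨m, hm, hmZ⟩ : ∃ m > 0, ∀ p ∈ Z, m ≤ f p.2 + f p.1 - 2 * f ((p.1 + p.2) / 2) := by
    rcases Z.eq_empty_or_nonempty with h | h
    · exact ⟨1, one_pos, by simp [h]⟩
    · obtain ⟨p, hp, hmin⟩ := hZ.exists_isMinOn h hc
      exact ⟨_, hpos p hp, fun p' hp' => hmin hp'⟩
  refine ⟨m, hm, fun x hx s hs t ht hr => ?_⟩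
  have hz : (x, t) ∈ Z := ⟨⟨hx, ht⟩, hr⟩
  have h1 := hmZ _ hz
  have h2 := hs _ (hmid _ hz)
  simp only at h1 h2
  linarith

/-- depth bound -/
lemma aux_depth {a b : ℝ} {f : ℝ → ℝ} (hf : ConvexOn ℝ (Set.Icc a b) f) {x δ s : ℝ} (hδ : 0 < δ)
    (h1 : x - δ ∈ Set.Icc a b) (h2 : x + δ ∈ Set.Icc a b)
    (hs : ∀ t ∈ Set.Icc a b, f x + s * (t - x) ≤ f t) {t : ℝ} (ht : |t - x| ≤ δ) :
    f t - f x - s * (t - x) ≤ f (x + δ) - 2 * f x + f (x - δ) := by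
  have e1 := hs _ h1
  have e2 := hs _ h2
  rw [abs_le] at ht
  have h := hf.2 h1 h2 (show 0 ≤ (x + δ - t) / (2 * δ) from div_nonneg (by linarith) (by linarith))
    (show 0 ≤ (t - x + δ) / (2 * δ) from div_nonneg (by linarith) (by linarith))
    (by field_simp; ring)
  simp only [smul_eq_mul] at h
  have e : (x + δ - t) / (2 * δ) * (x - δ) + (t - x + δ) / (2 * δ) * (x + δ) = t := by
    field_simp; ring
  rw [e] at h
  set u := (x + δ - t) / (2 * δ) with hu
  set v := (t - x + δ) / (2 * δ) with hv
  have huv : u + v = 1 := by rw [hu, hv]; field_simp; ring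
  have hu0 : 0 ≤ u := div_nonneg (by linarith) (by linarith)
  have hv0 : 0 ≤ v := div_nonneg (by linarith) (by linarith)
  have ht' : t - x = (v - u) * δ := by rw [hu, hv]; field_simp; ring
  rw [ht']
  have hu' : u = 1 - v := by linarith
  have hv1 : v ≤ 1 := by linarith
  rw [hu'] at h ⊢
  nlinarith [mul_le_mul_of_nonneg_left e1 hv0, mul_le_mul_of_nonneg_left e2 (by linarith : 0 ≤ 1 - v)]

lemma aux_pou (a b : ℝ) (hab : a < b) (M : ℕ) (hM : 0 < M) :
    ∃ χ : ℕ → ℝ → ℝ, (∀ k, Continuous (χ k)) ∧ (∀ k t, k < M → 0 ≤ χ k t) ∧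
      (∀ t, ∑ k ∈ Finset.range M, χ k t = 1) ∧
      ∀ k < M, ∀ t ∈ Set.Icc a b, χ k t ≠ 0 →
        |t - (a + (k + 1) * ((b - a) / (M + 1)))| ≤ (b - a) / (M + 1) := by
  set δ := (b - a) / (M + 1) with hδ
  have hδ0 : 0 < δ := div_pos (by linarith) (by positivity)
  have hb : b = a + (M + 1) * δ := by rw [hδ]; field_simp; ring
  let R : ℕ → ℝ → ℝ := fun k t => if k = 0 then 1 else if k = M then 0 else
    max 0 (min 1 ((t - a) / δ - k))
  have hR1 : ∀ k t, R k t ≤ 1 := fun k t => by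
    simp only [R]; split_ifs <;> simp
  have hR0 : ∀ k t, 0 ≤ R k t := fun k t => by
    simp only [R]; split_ifs <;> simp
  refine ⟨fun k t => R k t - R (k + 1) t, ?_, ?_, ?_, ?_⟩
  · intro k
    have : ∀ k, Continuous (R k) := by
      intro k
      simp only [R]
      split_ifs <;> fun_prop
    exact (this k).sub (this _)
  · intro k t hk
    rw [sub_nonneg]
    by_cases h0 : k = 0
    · simpa [R, h0] using hR1 (k + 1) t
    by_cases h1 : k + 1 = M
    · have : R (k + 1) t = 0 := by simp [R, h1]; omega
      rw [this]; exact hR0 _ _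
    · simp only [R, h0, h1, hk.ne, if_false, Nat.succ_ne_zero]
      push_cast
      gcongr
      linarith
  · intro t
    rw [Finset.sum_range_sub']
    simp [R, hM.ne']
  · intro k hk t ht hne
    have hkM : (k : ℝ) + 1 ≤ M := by exact_mod_cast hk
    by_contra hcon
    apply hne
    rw [not_le, lt_abs] at hcon
    simp only
    rcases hcon with h | h
    · have h0 : ((k : ℝ) + 2) * δ < t - a := by linarith
      have h0' : (k : ℝ) + 2 < (t - a) / δ := by rwa [lt_div_iff₀ hδ0]
      have hne : k + 1 ≠ M := by
        rintro rfl
        push_cast at hb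
        have := ht.2
        nlinarith
      have e1 : R (k + 1) t = 1 := by
        simp only [R, hne, if_false, Nat.succ_ne_zero]
        push_cast
        rw [min_eq_left (by linarith)]; simp
      have e2 : R k t = 1 := by
        simp only [R, hk.ne, if_false]
        split_ifs
        · rfl
        rw [min_eq_left (by linarith)]; simp
      rw [e1, e2, sub_self]
    · have h0 : t - a < (k : ℝ) * δ := by linarith
      have h0' : (t - a) / δ < k := by rwa [div_lt_iff₀ hδ0]
      have hne : k ≠ 0 := by
        rintro rfl
        have := ht.1
        simp at h0
        linarith
      have e1 : R (k + 1) t = 0 := by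
        simp only [R, if_false, Nat.succ_ne_zero]
        split_ifs
        · rfl
        push_cast
        exact max_eq_left ((min_le_right _ _).trans (by linarith))
      have e2 : R k t = 0 := by
        simp only [R, hk.ne, hne, if_false]
        exact max_eq_left ((min_le_right _ _).trans (by linarith))
      rw [e1, e2, sub_self]

/-- telescoped second differences go to zero -/
lemma aux_tele {a b : ℝ} (hab : a < b) {f : ℝ → ℝ} (hfc : ContinuousOn f (Set.Icc a b))
    {ε r : ℝ} (hε : 0 < ε) (hr : 0 < r) :
    ∃ M : ℕ, 0 < M ∧ (b - a) / (M + 1) < r ∧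
      ∑ k ∈ Finset.range M, (f (a + (k + 1) * ((b - a) / (M + 1)) + (b - a) / (M + 1))
        - 2 * f (a + (k + 1) * ((b - a) / (M + 1)))
        + f (a + (k + 1) * ((b - a) / (M + 1)) - (b - a) / (M + 1))) ≤ ε := by
  obtain ⟨d1, hd1, h1⟩ := Metric.continuousOn_iff.mp hfc a (by simp [hab.le]) (ε / 2) (by linarith)
  obtain ⟨d2, hd2, h2⟩ := Metric.continuousOn_iff.mp hfc b (by simp [hab.le]) (ε / 2) (by linarith)
  obtain ⟨M, hM⟩ := exists_nat_gt ((b - a) / (min r (min d1 d2)))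
  have hmin : 0 < min r (min d1 d2) := by positivity
  have hM0 : 0 < M := by
    have : (0 : ℝ) < M := lt_trans (div_pos (by linarith) hmin) hM
    exact_mod_cast this
  have hδm : (b - a) / (M + 1) < min r (min d1 d2) := by
    rw [div_lt_iff₀ hmin] at hM
    rw [div_lt_iff₀ (by positivity)]
    nlinarith
  refine ⟨M, hM0, hδm.trans_le (min_le_left _ _), ?_⟩
  set δ := (b - a) / (M + 1) with hδ
  have hδ0 : 0 < δ := div_pos (by linarith) (by positivity)
  have hb : b = a + (M + 1) * δ := by rw [hδ]; field_simp; ring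
  have hle : δ ≤ b - a := by
    rw [hδ]; exact div_le_self (by linarith) (by linarith [(Nat.cast_nonneg M : (0:ℝ) ≤ M)])
  have hs : ∀ k ∈ Finset.range M, (f (a + (k + 1) * δ + δ) - 2 * f (a + (k + 1) * δ)
        + f (a + (k + 1) * δ - δ)) =
      (fun k : ℕ => f (a + (k + 1) * δ) - f (a + k * δ)) (k + 1) -
      (fun k : ℕ => f (a + (k + 1) * δ) - f (a + k * δ)) k := by
    intro k _
    simp only
    push_cast
    have e1 : a + ((k : ℝ) + 1) * δ + δ = a + (k + 1 + 1) * δ := by ring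
    have e2 : a + ((k : ℝ) + 1) * δ - δ = a + k * δ := by ring
    rw [e1, e2]; ring
  rw [Finset.sum_congr rfl hs,
    Finset.sum_range_sub (fun k : ℕ => f (a + (k + 1) * δ) - f (a + k * δ))]
  have g1 := h1 (a + δ) ⟨by linarith, by linarith⟩ (by
    rw [Real.dist_eq, add_sub_cancel_left, abs_of_pos hδ0]
    exact hδm.trans_le ((min_le_right _ _).trans (min_le_left _ _)))
  have g2 := h2 (b - δ) ⟨by linarith, by linarith⟩ (by
    rw [Real.dist_eq, sub_sub_cancel_left, abs_neg, abs_of_pos hδ0]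
    exact hδm.trans_le ((min_le_right _ _).trans (min_le_right _ _)))
  rw [Real.dist_eq, abs_lt] at g1 g2
  have e1 : a + (M + 1) * δ = b := hb.symm
  have e2 : a + M * δ = b - δ := by rw [hb]; ring
  simp only [Nat.cast_zero, zero_add, one_mul, zero_mul, add_zero]
  rw [e1, e2]
  linarith [g1.1, g1.2, g2.1, g2.2]

lemma aux_loc {𝓚 : Type*} [NormedAddCommGroup 𝓚] [InnerProductSpace ℂ 𝓚] [CompleteSpace 𝓚]
    {a b : ℝ} {K : 𝓚 →L[ℂ] 𝓚} (hK : IsSelfAdjoint K) (hspec : spectrum ℝ K ⊆ Set.Icc a b)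
    {g u : ℝ → ℝ} (hg : ContinuousOn g (Set.Icc a b)) (hu : ContinuousOn u (Set.Icc a b))
    {d : ℝ} (h : ∀ t ∈ Set.Icc a b, u t ≠ 0 → g t ≤ d) (ξ : 𝓚) :
    (cfc g K).reApplyInnerSelf (cfc u K ξ) ≤ d * ‖cfc u K ξ‖ ^ 2 := by
  have hg' := hg.mono hspec
  have hu' := hu.mono hspec
  have hsa : star (cfc u K) = cfc u K := (cfc_predicate u K : IsSelfAdjoint _).star_eq
  have e1 : star (cfc u K) * cfc g K * cfc u K = cfc (fun t => u t * g t * u t) K := by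
    rw [hsa, ← cfc_mul u g K, ← cfc_mul (fun t => u t * g t) u K (hu'.mul hg')]
  have e2 : d • (star (cfc u K) * 1 * cfc u K) = cfc (fun t => d * (u t * u t)) K := by
    rw [hsa, mul_one, ← cfc_mul u u K, cfc_const_mul d (fun t => u t * u t) K (hu'.mul hu')]
  have hle : cfc (fun t => u t * g t * u t) K ≤ cfc (fun t => d * (u t * u t)) K := by
    refine cfc_mono (fun t ht => ?_) ((hu'.mul hg').mul hu')
      (continuousOn_const.mul (hu'.mul hu'))
    by_cases h0 : u t = 0
    · simp [h0]
    · nlinarith [h t (hspec ht) h0, mul_self_nonneg (u t)]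
  have := aux_q_mono hle ξ
  rw [aux_q_star, e1]
  refine this.trans (le_of_eq ?_)
  rw [← e2, ← aux_q_one (cfc u K ξ), aux_q_star]
  simp [ContinuousLinearMap.reApplyInnerSelf_apply, inner_smul_left_eq_smul]

lemma aux_sumsq {𝓚 : Type*} [NormedAddCommGroup 𝓚] [InnerProductSpace ℂ 𝓚] [CompleteSpace 𝓚]
    {a b : ℝ} {K : 𝓚 →L[ℂ] 𝓚} (hK : IsSelfAdjoint K) (hspec : spectrum ℝ K ⊆ Set.Icc a b)
    (M : ℕ) (u : ℕ → ℝ → ℝ) (hu : ∀ k, ContinuousOn (u k) (Set.Icc a b))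
    (h0 : ∀ k < M, ∀ t ∈ Set.Icc a b, 0 ≤ u k t)
    (h1 : ∀ t ∈ Set.Icc a b, ∑ k ∈ Finset.range M, u k t ≤ 1) (ξ : 𝓚) :
    ∑ k ∈ Finset.range M, ‖cfc (u k) K ξ‖ ^ 2 ≤ ‖ξ‖ ^ 2 := by
  have hu' : ∀ k, ContinuousOn (u k) (spectrum ℝ K) := fun k => (hu k).mono hspec
  have e : ∀ k, ‖cfc (u k) K ξ‖ ^ 2 = (cfc (fun t => u k t * u k t) K).reApplyInnerSelf ξ := by
    intro k
    have hsa : star (cfc (u k) K) = cfc (u k) K :=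
      (cfc_predicate (u k) K : IsSelfAdjoint _).star_eq
    rw [← aux_q_one, aux_q_star, hsa, mul_one, ← cfc_mul (u k) (u k) K (hu' k) (hu' k)]
  have e2 : ∑ k ∈ Finset.range M, (cfc (fun t => u k t * u k t) K).reApplyInnerSelf ξ
      = (cfc (∑ k ∈ Finset.range M, fun t => u k t * u k t) K).reApplyInnerSelf ξ := by
    rw [cfc_sum (fun k t => u k t * u k t) _ _ (fun k _ => (hu' k).mul (hu' k))]
    simp [ContinuousLinearMap.reApplyInnerSelf_apply, sum_inner]
  simp only [e]
  rw [e2, ← aux_q_one]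
  refine aux_q_mono ?_ ξ
  refine cfc_le_one _ K fun t ht => ?_
  rw [Finset.sum_apply]
  refine le_trans (Finset.sum_le_sum fun k hk => ?_) (h1 t (hspec ht))
  have hk' := Finset.mem_range.mp hk
  have p0 := h0 k hk' t (hspec ht)
  have : u k t ≤ 1 := le_trans
    (Finset.single_le_sum (f := fun k => u k t)
      (fun j hj => h0 j (Finset.mem_range.mp hj) t (hspec ht)) hk) (h1 t (hspec ht))
  nlinarith

lemma aux_aff_cfc {𝓗 : Type*} [NormedAddCommGroup 𝓗] [InnerProductSpace ℂ 𝓗] [CompleteSpace 𝓗]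
    {H : 𝓗 →L[ℂ] 𝓗} (hH : IsSelfAdjoint H) {f : ℝ → ℝ} (hf : ContinuousOn f (spectrum ℝ H))
    (c α s : ℝ) :
    cfc (fun t => c * (f t - (α + s * t))) H = c • (cfc f H - (α • 1 + s • H)) := by
  rw [cfc_const_mul c (fun t => f t - (α + s * t)) H (by fun_prop),
    cfc_sub f (fun t => α + s * t) H hf (by fun_prop),
    cfc_const_add α (fun t => s * t) H (by fun_prop), cfc_const_mul_id s H,
    Algebra.algebraMap_eq_smul_one]

lemma aux_map_real {𝓗 𝓚 : Type*} [NormedAddCommGroup 𝓗] [InnerProductSpace ℂ 𝓗]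
    [NormedAddCommGroup 𝓚] [InnerProductSpace ℂ 𝓚]
    (φ : (𝓗 →L[ℂ] 𝓗) →ₗ[ℂ] (𝓚 →L[ℂ] 𝓚)) (r : ℝ) (T : 𝓗 →L[ℂ] 𝓗) : φ (r • T) = r • φ T :=
  LinearMap.map_smul_of_tower φ r T

lemma aux_step1 {𝓗 𝓚 : Type*} [NormedAddCommGroup 𝓗] [InnerProductSpace ℂ 𝓗]
    [CompleteSpace 𝓗] [NormedAddCommGroup 𝓚] [InnerProductSpace ℂ 𝓚] [CompleteSpace 𝓚]
    {a b : ℝ} (hab : a < b)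
    {f : ℝ → ℝ} (hf : StrictConvexOn ℝ (Set.Icc a b) f)
    (hfc : ContinuousOn f (Set.Icc a b))
    (φ : (𝓗 →L[ℂ] 𝓗) →ₗ[ℂ] (𝓚 →L[ℂ] 𝓚)) (hφ1 : φ 1 = 1)
    (hpos : ∀ S T, S ≤ T → φ S ≤ φ T)
    {H : 𝓗 →L[ℂ] 𝓗} (hH : IsSelfAdjoint H) (hspec : spectrum ℝ H ⊆ Set.Icc a b)
    (hK : IsSelfAdjoint (φ H)) (hspecK : spectrum ℝ (φ H) ⊆ Set.Icc a b)
    (hcomm : φ (cfc f H) = cfc f (φ H))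
    {x r : ℝ} (hr : 0 < r) {w : ℝ → ℝ} (hw : Continuous w)
    (hw0 : ∀ t ∈ Set.Icc a b, 0 ≤ w t) (hw1 : ∀ t ∈ Set.Icc a b, w t ≤ 1)
    (hwx : ∀ t ∈ Set.Icc a b, w t ≠ 0 → |t - x| ≤ r) (ξ : 𝓚) :
    (φ (cfc (fun t => max 0 ((t - x) ^ 2 - 9 * r ^ 2)) H)).reApplyInnerSelf (cfc w (φ H) ξ)
      ≤ 0 := by
  set K := φ H with hKdef
  set G : ℝ → ℝ := fun t => max 0 ((t - x) ^ 2 - 9 * r ^ 2) with hG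
  have hGc : Continuous G := by rw [hG]; fun_prop
  have hG0 : ∀ t, 0 ≤ G t := fun t => le_max_left _ _
  have hA : 0 ≤ φ (cfc G H) := by
    have := hpos 0 (cfc G H) (cfc_nonneg fun t _ => hG0 t)
    rwa [map_zero] at this
  obtain ⟨C, hC0, hC⟩ : ∃ C > 0, ∀ t ∈ Set.Icc a b, G t ≤ C := by
    obtain ⟨C, hC⟩ := (isCompact_Icc (a := a) (b := b)).bddAbove_image hGc.continuousOn
    exact ⟨max C 1, by positivity, fun t ht => (hC ⟨t, ht, rfl⟩).trans (le_max_left _ _)⟩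
  obtain ⟨m, hm, hmod⟩ := aux_modulus hf hfc hr
  have main : ∀ ε > 0, (φ (cfc G H)).reApplyInnerSelf (cfc w K ξ) ≤ ε * ‖ξ‖ ^ 2 := by
    intro ε hε
    obtain ⟨M, hM, hδr, hsum⟩ := aux_tele hab hfc (ε := m / C * ε) (by positivity) hr
    obtain ⟨χ, hχc, hχ0, hχ1, hχs⟩ := aux_pou a b hab M hM
    set δ := (b - a) / (M + 1) with hδ
    have hδ0 : 0 < δ := div_pos (by linarith) (by positivity)
    have hb : b = a + (M + 1) * δ := by rw [hδ]; field_simp; ring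
    let X : ℕ → ℝ := fun k => a + (k + 1) * δ
    let d : ℕ → ℝ := fun k => f (X k + δ) - 2 * f (X k) + f (X k - δ)
    have hXm : ∀ k < M, X k - δ ∈ Set.Icc a b ∧ X k + δ ∈ Set.Icc a b := by
      intro k hk
      have hk' : (k : ℝ) + 1 ≤ M := by exact_mod_cast hk
      have hk0 : (0 : ℝ) ≤ k := Nat.cast_nonneg k
      simp only [X, Set.mem_Icc]
      rw [hb]
      refine ⟨⟨?_, ?_⟩, ?_, ?_⟩ <;> nlinarith
    have hXI : ∀ k < M, X k ∈ Set.Ioo a b := fun k hk =>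
      ⟨by linarith [(hXm k hk).1.1], by linarith [(hXm k hk).2.2]⟩
    have hsup : ∀ k < M, ∃ s, ∀ t ∈ Set.Icc a b, f (X k) + s * (t - X k) ≤ f t :=
      fun k hk => aux_support hf.convexOn (hXI k hk)
    have hd0 : ∀ k < M, 0 ≤ d k := by
      intro k hk
      obtain ⟨s, hs⟩ := hsup k hk
      have e1 := hs _ (hXm k hk).1
      have e2 := hs _ (hXm k hk).2
      simp only [d]; linarith
    let u : ℕ → ℝ → ℝ := fun k t => χ k t * w t
    have huc : ∀ k, ContinuousOn (u k) (Set.Icc a b) := fun k => ((hχc k).mul hw).continuousOn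
    have hsumu : ∀ t, ∑ k ∈ Finset.range M, u k t = w t := fun t => by
      simp only [u]
      rw [← Finset.sum_mul, hχ1, one_mul]
    have hη : cfc w K ξ = ∑ k ∈ Finset.range M, cfc (u k) K ξ := by
      rw [← _root_.sum_apply, ← cfc_sum _ _ _ (fun k _ => (huc k).mono hspecK)]
      congr 2
      ext t
      rw [Finset.sum_apply, hsumu]
    have hss := aux_sumsq hK hspecK M u huc
      (fun k hk t ht => mul_nonneg (hχ0 k t hk) (hw0 t ht))
      (fun t ht => by rw [hsumu]; exact hw1 t ht) ξ
    have hbd : ∀ k < M, (φ (cfc G H)).reApplyInnerSelf (cfc (u k) K ξ)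
        ≤ (C / m * d k) * ‖cfc (u k) K ξ‖ ^ 2 := by
      intro k hk
      by_cases hex : ∃ t ∈ Set.Icc a b, u k t ≠ 0
      · obtain ⟨t₀, ht₀, hut⟩ := hex
        have c1 := hχs k hk t₀ ht₀ (left_ne_zero_of_mul hut)
        have c2 := hwx t₀ ht₀ (right_ne_zero_of_mul hut)
        obtain ⟨s, hs⟩ := hsup k hk
        have hle : ∀ t ∈ Set.Icc a b, G t ≤ C / m * (f t - ((f (X k) - s * X k) + s * t)) := by
          intro t ht
          have hh : 0 ≤ f t - ((f (X k) - s * X k) + s * t) := by linarith [hs t ht]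
          by_cases h3 : |t - x| ≤ 3 * r
          · have : G t = 0 := by
              simp only [hG]
              refine max_eq_left ?_
              have := sq_le_sq' (by linarith [abs_nonneg (t - x)]) h3
              rw [sq_abs] at this
              linarith
            rw [this]; positivity
          · have : r ≤ |t - X k| := by
              have : |t - x| ≤ |t - X k| + (|t₀ - X k| + |t₀ - x|) := by
                have := abs_sub_le t (X k) x
                have := abs_sub_le (X k) t₀ x
                rw [abs_sub_comm (X k) t₀] at this
                linarith
              have : |t₀ - X k| ≤ δ := c1
              linarith
            have := hmod (X k) (Set.Ioo_subset_Icc_self (hXI k hk)) s hs t ht this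
            calc G t ≤ C := hC t ht
              _ = C / m * m := by field_simp
              _ ≤ _ := by gcongr; linarith
        have h1 : φ (cfc G H) ≤
            cfc (fun t => C / m * (f t - ((f (X k) - s * X k) + s * t))) K := by
          have : cfc (fun t => C / m * (f t - ((f (X k) - s * X k) + s * t))) K
              = φ (cfc (fun t => C / m * (f t - ((f (X k) - s * X k) + s * t))) H) := by
            rw [aux_aff_cfc hK (hfc.mono hspecK), aux_aff_cfc hH (hfc.mono hspec), aux_map_real,
              map_sub, map_add, aux_map_real, aux_map_real, hφ1, hcomm]
          rw [this]
          refine hpos _ _ (cfc_mono (fun t ht => hle t (hspec ht)) hGc.continuousOn ?_)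
          have := hfc.mono hspec
          fun_prop
        refine (aux_q_mono h1 _).trans ?_
        refine aux_loc hK hspecK (by fun_prop) (huc k) (fun t ht hne => ?_) ξ
        have c3 := hχs k hk t ht (left_ne_zero_of_mul hne)
        have := aux_depth hf.convexOn hδ0 (hXm k hk).1 (hXm k hk).2 hs c3
        have hCm : 0 ≤ C / m := by positivity
        refine mul_le_mul_of_nonneg_left ?_ hCm
        simp only [d]; linarith
      · push Not at hex
        have : cfc (u k) K = 0 := by
          rw [cfc_congr (g := fun _ => 0) (fun t ht => hex t (hspecK ht))]
          simp
        simp [this, ContinuousLinearMap.reApplyInnerSelf_apply]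
    have := aux_cs hA M (fun k => cfc (u k) K ξ) (fun k => C / m * d k)
      (fun k hk => mul_nonneg (by positivity) (hd0 k hk)) hbd
    rw [hη]
    refine this.trans ?_
    rw [← Finset.mul_sum]
    have hsum' : ∑ k ∈ Finset.range M, d k ≤ m / C * ε := hsum
    have h2 : C / m * ∑ k ∈ Finset.range M, d k ≤ ε := by
      calc _ ≤ C / m * (m / C * ε) := by gcongr
        _ = ε := by field_simp
    calc _ ≤ ε * ∑ k ∈ Finset.range M, ‖cfc (u k) K ξ‖ ^ 2 := by gcongr
      _ ≤ _ := by gcongr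
  by_contra hcon
  push Not at hcon
  set q := (φ (cfc G H)).reApplyInnerSelf (cfc w K ξ)
  have := main (q / (2 * (‖ξ‖ ^ 2 + 1))) (by positivity)
  rw [div_mul_eq_mul_div, le_div_iff₀ (by positivity)] at this
  nlinarith [sq_nonneg ‖ξ‖]

lemma aux_step2 {𝓗 𝓚 : Type*} [NormedAddCommGroup 𝓗] [InnerProductSpace ℂ 𝓗]
    [CompleteSpace 𝓗] [NormedAddCommGroup 𝓚] [InnerProductSpace ℂ 𝓚] [CompleteSpace 𝓚]
    {a b : ℝ} (hab : a < b)
    {f : ℝ → ℝ} (hf : StrictConvexOn ℝ (Set.Icc a b) f)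
    (hfc : ContinuousOn f (Set.Icc a b))
    (φ : (𝓗 →L[ℂ] 𝓗) →ₗ[ℂ] (𝓚 →L[ℂ] 𝓚)) (hφ1 : φ 1 = 1)
    (hpos : ∀ S T, S ≤ T → φ S ≤ φ T)
    {H : 𝓗 →L[ℂ] 𝓗} (hH : IsSelfAdjoint H) (hspec : spectrum ℝ H ⊆ Set.Icc a b)
    (hK : IsSelfAdjoint (φ H)) (hspecK : spectrum ℝ (φ H) ⊆ Set.Icc a b)
    (hcomm : φ (cfc f H) = cfc f (φ H)) (hD : 0 ≤ φ (H * H) - φ H * φ H) :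
    φ (H * H) - φ H * φ H = 0 := by
  set K := φ H with hKdef
  set D := φ (H * H) - K * K with hDdef
  have main : ∀ M : ℕ, 0 < M → ∀ ξ : 𝓚, D.reApplyInnerSelf ξ ≤
      9 * (b - a) ^ 2 / (M + 1) * ‖ξ‖ ^ 2 := by
    intro M hM ξ
    obtain ⟨χ, hχc, hχ0, hχ1, hχs⟩ := aux_pou a b hab M hM
    set δ := (b - a) / (M + 1) with hδ
    have hδ0 : 0 < δ := div_pos (by linarith) (by positivity)
    have hη : ξ = ∑ k ∈ Finset.range M, cfc (χ k) K ξ := by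
      rw [← _root_.sum_apply, ← cfc_sum _ _ _ (fun k _ => (hχc k).continuousOn)]
      have : (∑ k ∈ Finset.range M, χ k) = fun _ => 1 := by
        ext t; rw [Finset.sum_apply, hχ1]
      rw [this, cfc_const_one ℝ K]
      rfl
    have hss := aux_sumsq hK hspecK M χ (fun k => (hχc k).continuousOn)
      (fun k hk t _ => hχ0 k t hk) (fun t _ => (hχ1 t).le) ξ
    have hbd : ∀ k < M, D.reApplyInnerSelf (cfc (χ k) K ξ)
        ≤ (9 * δ ^ 2) * ‖cfc (χ k) K ξ‖ ^ 2 := by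
      intro k hk
      set x := a + (k + 1) * δ with hx
      have h1 := aux_step1 hab hf hfc φ hφ1 hpos hH hspec hK hspecK hcomm hδ0 (hχc k)
        (fun t _ => hχ0 k t hk) (fun t _ => by
          rw [← hχ1 t]
          exact Finset.single_le_sum (f := fun k => χ k t)
            (fun j hj => hχ0 j t (Finset.mem_range.mp hj)) (Finset.mem_range.mpr hk))
        (hχs k hk) ξ
      set G : ℝ → ℝ := fun t => max 0 ((t - x) ^ 2 - 9 * δ ^ 2) with hG
      have hGc : Continuous G := by rw [hG]; fun_prop
      have e0 : ∀ t : ℝ, (t - x) ^ 2 - 9 * δ ^ 2 ≤ G t := fun t => le_max_right _ _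
      have e1 : (H - x • 1) * (H - x • 1) ≤ cfc G H + (9 * δ ^ 2) • 1 := by
        have l : (H - x • 1) * (H - x • 1) = cfc (fun t : ℝ => (t - x) * (t - x)) H := by
          rw [cfc_mul (fun t : ℝ => t - x) (fun t : ℝ => t - x) H,
            cfc_sub (fun t : ℝ => t) (fun _ => x) H, cfc_id' ℝ H, cfc_const x H, Algebra.algebraMap_eq_smul_one]
        have l2 : cfc G H + (9 * δ ^ 2) • 1 = cfc (fun t => G t + 9 * δ ^ 2) H := by
          rw [cfc_add_const (9 * δ ^ 2) G H hGc.continuousOn, Algebra.algebraMap_eq_smul_one]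
        rw [l, l2]
        refine cfc_mono (fun t _ => ?_) (by fun_prop)
          (hGc.add continuous_const).continuousOn
        linarith [e0 t, sq (t - x)]
      have e2 := hpos _ _ e1
      have e3 : φ ((H - x • 1) * (H - x • 1)) = D + (K - x • 1) * (K - x • 1) := by
        simp only [sub_mul, mul_sub, mul_one, one_mul, smul_mul_assoc, mul_smul_comm, map_sub,
          aux_map_real, hφ1, hDdef, ← hKdef]
        abel
      have e4 : 0 ≤ (K - x • 1) * (K - x • 1) := by
        have hsa : IsSelfAdjoint (K - x • (1 : 𝓚 →L[ℂ] 𝓚)) :=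
          hK.sub ((IsSelfAdjoint.all x).smul (IsSelfAdjoint.one _))
        exact hsa.mul_self_nonneg
      rw [e3, map_add, aux_map_real, hφ1] at e2
      have e5 : D ≤ φ (cfc G H) + (9 * δ ^ 2) • 1 := (le_add_of_nonneg_right e4).trans e2
      refine (aux_q_mono e5 _).trans ?_
      have e6 : (φ (cfc G H) + (9 * δ ^ 2) • (1 : 𝓚 →L[ℂ] 𝓚)).reApplyInnerSelf (cfc (χ k) K ξ)
          = (φ (cfc G H)).reApplyInnerSelf (cfc (χ k) K ξ) + 9 * δ ^ 2 * ‖cfc (χ k) K ξ‖ ^ 2 := by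
        rw [← aux_q_one (cfc (χ k) K ξ)]
        simp only [ContinuousLinearMap.reApplyInnerSelf_apply, _root_.add_apply,
          inner_add_left, map_add, _root_.smul_apply, inner_smul_left_eq_smul,
          RCLike.smul_re]
      rw [e6]
      linarith
    have := aux_cs hD M (fun k => cfc (χ k) K ξ) (fun _ => 9 * δ ^ 2)
      (fun k hk => by positivity) hbd
    rw [← hη] at this
    refine this.trans ?_
    have h9 : ∑ k ∈ Finset.range M, 9 * δ ^ 2 ≤ 9 * (b - a) ^ 2 / (M + 1) := by
      rw [Finset.sum_const, Finset.card_range, nsmul_eq_mul, hδ, div_pow, mul_div_assoc',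
        mul_div_assoc', div_le_div_iff₀ (by positivity) (by positivity)]
      have : 0 ≤ 9 * (b - a) ^ 2 * ((M : ℝ) + 1) := by positivity
      nlinarith
    exact mul_le_mul h9 hss (Finset.sum_nonneg fun _ _ => by positivity) (by positivity)
  have hle : ∀ ξ : 𝓚, D.reApplyInnerSelf ξ ≤ 0 := by
    intro ξ
    have ht : Filter.Tendsto (fun M : ℕ => 9 * (b - a) ^ 2 * ‖ξ‖ ^ 2 * (1 / ((M : ℝ) + 1)))
        Filter.atTop (nhds 0) := by
      have := (tendsto_one_div_add_atTop_nhds_zero_nat (𝕜 := ℝ)).const_mul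
        (9 * (b - a) ^ 2 * ‖ξ‖ ^ 2)
      rwa [mul_zero] at this
    refine ge_of_tendsto ht ?_
    filter_upwards [Filter.eventually_gt_atTop 0] with M hM
    refine (main M hM ξ).trans (le_of_eq ?_)
    ring
  refine le_antisymm ?_ hD
  rw [ContinuousLinearMap.le_def, ContinuousLinearMap.isPositive_def']
  refine ⟨?_, fun ξ => ?_⟩
  · exact (IsSelfAdjoint.zero _).sub (IsSelfAdjoint.of_nonneg hD)
  · have := hle ξ
    simp only [ContinuousLinearMap.reApplyInnerSelf_apply] at this ⊢
    simpa using this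

theorem stmt_9 {𝓗 𝓚 : Type*} [NormedAddCommGroup 𝓗] [InnerProductSpace ℂ 𝓗]
    [CompleteSpace 𝓗] [NormedAddCommGroup 𝓚] [InnerProductSpace ℂ 𝓚] [CompleteSpace 𝓚]
    (a b : ℝ) (hab : a ≤ b)
    (f : ℝ → ℝ) (hf : StrictConvexOn ℝ (Set.Icc a b) f)
    (hfc : ContinuousOn f (Set.Icc a b))
    (φ : (𝓗 →L[ℂ] 𝓗) →ₗ[ℂ] (𝓚 →L[ℂ] 𝓚))
    (hφ1 : φ 1 = 1)
    (hφcp : ∀ (n : ℕ) (A : Matrix (Fin n) (Fin n) (𝓗 →L[ℂ] 𝓗)),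
      (∃ B, A = Bᴴ * B) → ∃ C, A.map (fun x => φ x) = Cᴴ * C)
    (H : 𝓗 →L[ℂ] 𝓗) (hH : IsSelfAdjoint H) (hspec : spectrum ℝ H ⊆ Set.Icc a b)
    (hcomm : φ (cfc f H) = cfc f (φ H)) :
    ∀ p q : Polynomial ℂ, φ (aeval H p * aeval H q) = φ (aeval H p) * φ (aeval H q) := by
  intro p q
  have hpos : ∀ S T, S ≤ T → φ S ≤ φ T := fun S T h => aux_pos φ hφcp h
  have hdom := aux_dom φ hφ1 hφcp H hH
  have hK := (hdom 1).1
  have hr : ∀ r : ℝ, φ (algebraMap ℝ _ r) = algebraMap ℝ _ r := fun r => by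
    rw [Algebra.algebraMap_eq_smul_one, aux_map_real, hφ1, Algebra.algebraMap_eq_smul_one]
  have haH : algebraMap ℝ _ a ≤ H := algebraMap_le_of_le_spectrum fun t ht => (hspec ht).1
  have hbH : H ≤ algebraMap ℝ _ b := le_algebraMap_of_spectrum_le fun t ht => (hspec ht).2
  have haK := hpos _ _ haH
  have hbK := hpos _ _ hbH
  rw [hr] at haK hbK
  have hspecK : spectrum ℝ (φ H) ⊆ Set.Icc a b := fun t ht =>
    ⟨(algebraMap_le_iff_le_spectrum).mp haK t ht, (le_algebraMap_iff_spectrum_le).mp hbK t ht⟩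
  have hD : φ (H * H) - φ H * φ H = 0 := by
    rcases hab.lt_or_eq with hlt | rfl
    · exact aux_step2 hlt hf hfc φ hφ1 hpos hH hspec hK hspecK hcomm (hdom 1).2.1
    · have : H = algebraMap ℝ _ a := le_antisymm hbH haH
      rw [this, ← map_mul, hr, hr, map_mul, sub_self]
  exact aux_poly φ hφ1 H (fun Y => (hdom Y).2.2 hD) p _
end
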